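/- arXiv:1309.6178 — 3 statements merged into one kernel-verified Lean document; each statement's English description precedes it below -/
import Mathlib

section
/- In the simplified model (Case II of the covariance computation), there are constants C > 0 and N such that for all n ≥ N and all 2 ≤ i ≤ m − 1, |Cov(Ȳ_{i,m}, Ȳ_{i+1,m}) − (σ²/m)∫₀¹ Λ(u)Λ(1−u) du + τ²(m/n)∫₀¹ λ(u)λ(1−u) du| ≤ C/n; that is, Cov(Ȳ_{i,m}, Ȳ_{i+1,m}) = (σ²/m)∫₀¹ Λ(u)Λ(1−u) du − τ²(m/n)∫₀¹ λ(u)λ(1−u) du + O(1/n) uniformly in i. -/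
open MeasureTheory ProbabilityTheory Real

noncomputable section

/-- `Λ(u) = -∫₀ᵘ λ(v) dv`. -/
def bigLam (lam : ℝ → ℝ) (u : ℝ) : ℝ := -∫ v in (0:ℝ)..u, lam v

/-- A (normalized) pre-average function: piecewise Lipschitz on `[0,2]`,
antisymmetric about `1`, and normalized. -/
structure IsPreAverageFn (lam : ℝ → ℝ) : Prop where
  piecewise_lipschitz : ∃ (N : ℕ) (t : ℕ → ℝ) (K : NNReal),
      0 < N ∧ t 0 = 0 ∧ t N = 2 ∧ (∀ i < N, t i < t (i + 1)) ∧
      ∀ i < N, LipschitzOnWith K lam (Set.Ioo (t i) (t (i + 1)))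
  antisymm : ∀ t ∈ Set.Icc (0:ℝ) 1, lam t = - lam (2 - t)
  normalized : Real.sqrt (2 * ∫ s in (0:ℝ)..1, (∫ u in (0:ℝ)..s, lam u) ^ 2) = 1

/-- `m = n / ⌊√n / c⌋`. -/
def mOf (c : ℝ) (n : ℕ) : ℕ := n / ⌊Real.sqrt n / c⌋₊

/-- The indices `j` with `j/n ∈ [(i-2)/m , i/m]`. -/
def blockIdx (n m i : ℕ) : Finset ℕ :=
  (Finset.range (n + 1)).filter fun j =>
    ((i : ℝ) - 2) / m ≤ (j : ℝ) / n ∧ (j : ℝ) / n ≤ (i : ℝ) / m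

variable {Ω : Type*}

/-- Pre-averaged value `Ā_{i,m} = (m/n) ∑_{j/n ∈ [(i-2)/m, i/m]} λ(m j/n - (i-2)) A_j`. -/
def preAvg (lam : ℝ → ℝ) (n m : ℕ) (A : ℕ → Ω → ℝ) (i : ℕ) (ω : Ω) : ℝ :=
  ((m : ℝ) / n) * ∑ j ∈ blockIdx n m i,
    lam ((m : ℝ) * j / n - ((i : ℝ) - 2)) * A j ω

/-- Bias correction `𝔟(λ, A)_{i,m}`. -/
def biasCorr (lam : ℝ → ℝ) (n m : ℕ) (A : ℕ → Ω → ℝ) (i : ℕ) (ω : Ω) : ℝ :=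
  ((m : ℝ) ^ 2 / (2 * (n : ℝ) ^ 2)) * ∑ j ∈ (blockIdx n m i).filter (fun j => 1 ≤ j),
    (lam ((m : ℝ) * j / n - ((i : ℝ) - 2))) ^ 2 * (A j ω - A (j - 1) ω) ^ 2

/-- The simplified model: `(W_{j/n})_j` and `(η_{j,n})_j` form a centered jointly Gaussian
family with `Cov(W_{j/n}, W_{l/n}) = min(j,l)/n`, `(η_{j,n})` standard Gaussian i.i.d.
and uncorrelated with the `W` grid values. -/
def IsSimplifiedModel [MeasureSpace Ω] (n : ℕ) (W η : ℕ → Ω → ℝ) : Prop :=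
  (∀ j, Measurable (W j)) ∧ (∀ j, Measurable (η j)) ∧
  (∀ a b : ℕ → ℝ, ∃ v : NNReal,
    Measure.map (fun ω => ∑ j ∈ Finset.range (n + 1), (a j * W j ω + b j * η j ω)) ℙ
      = gaussianReal 0 v) ∧
  (∀ j l, j ≤ n → l ≤ n → ∫ ω, W j ω * W l ω = (min j l : ℝ) / n) ∧
  (∀ j l, j ≤ n → l ≤ n → ∫ ω, η j ω * η l ω = if j = l then 1 else 0) ∧
  (∀ j l, j ≤ n → l ≤ n → ∫ ω, W j ω * η l ω = 0)

/-- The observations `Y_{j,n} = σ W_{j/n} + τ η_{j,n}`. -/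
def obs (σ τ : ℝ) (W η : ℕ → Ω → ℝ) (j : ℕ) (ω : Ω) : ℝ := σ * W j ω + τ * η j ω

end

/-!
Extend `λ` by zero outside `[0, 2]` to a function `g` on the line and put `h = m / n`, `a = i - 2`.
Since `min j l` is the number of `k` with `1 ≤ k ≤ j` and `k ≤ l`, the Brownian part of the
covariance is `σ² / n` times a sum over `k` of products of the tail sums `h ∑_{j ≥ k} g (h j - a)`
and `h ∑_{j ≥ k} g (h j - a - 1)`, while the noise part is `τ² h² ∑_j g (h j - a) g (h j - a - 1)`.

A Riemann sum of mesh `h` differs from its integral by at most `h` times the total variation of the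
integrand; working with bounded variation accommodates the jumps of `g`. By antisymmetry `Λ`
vanishes outside `[0, 2]` and is symmetric about `1`, so the tail sums are close to `Λ (h k - a)`
and `Λ (h k - a - 1)`, and the lag-one integrals of `Λ` and `g` reduce to `∫₀¹ Λ(u) Λ(1 - u) du`
and `-∫₀¹ λ(u) λ(1 - u) du`. The resulting errors, of order `h / m = 1 / n` and `h²`, are both
`O(1 / n)` because `m² = O(n)`.
-/

namespace PreAveraging

open Set

section BoundedVariation

variable {α : Type*} [LinearOrder α] {f g : α → ℝ} {s t : Set α}

lemma boundedVariationOn_sub (hf : BoundedVariationOn f s) (hg : BoundedVariationOn g s) :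
    BoundedVariationOn (f - g) s := by
  refine ne_top_of_le_ne_top (ENNReal.add_ne_top.2 ⟨hf, hg⟩) (iSup_le fun p ↦ ?_)
  obtain ⟨n, u, hu, hus⟩ := p
  calc ∑ i ∈ Finset.range n, edist ((f - g) (u (i + 1))) ((f - g) (u i))
      ≤ ∑ i ∈ Finset.range n,
          (edist (f (u (i + 1))) (f (u i)) + edist (g (u (i + 1))) (g (u i))) := by
        gcongr with i
        simp only [Pi.sub_apply, sub_eq_add_neg]
        exact (edist_add_add_le _ _ _ _).trans_eq (by rw [edist_neg_neg])
    _ ≤ eVariationOn f s + eVariationOn g s := by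
        rw [Finset.sum_add_distrib]
        exact add_le_add (eVariationOn.sum_le hu hus) (eVariationOn.sum_le hu hus)

lemma exists_boundedVariationOn_univ_eqOn_of_monotoneOn (hf : MonotoneOn f s) {C : ℝ}
    (hC : ∀ x ∈ s, |f x| ≤ C) : ∃ F : α → ℝ, BoundedVariationOn F univ ∧ EqOn f F s := by
  obtain ⟨G, G_mono, hG⟩ := hf.exists_monotone_extension
    ⟨-C, forall_mem_image.2 fun x hx ↦ (abs_le.1 (hC x hx)).1⟩
    ⟨C, forall_mem_image.2 fun x hx ↦ (abs_le.1 (hC x hx)).2⟩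
  refine ⟨fun x ↦ max (-|C|) (min |C| (G x)), ?_, fun x hx ↦ ?_⟩
  · refine MonotoneOn.boundedVariationOn (C := |C|)
      (fun x _ y _ hxy ↦ max_le_max le_rfl (min_le_min le_rfl (G_mono hxy))) fun x _ ↦ ?_
    exact abs_le.2 ⟨le_max_left _ _, max_le (neg_le_self (abs_nonneg C)) (min_le_left _ _)⟩
  · obtain ⟨hl, hu⟩ := abs_le.1 ((hC x hx).trans (le_abs_self C))
    simp only [← hG hx, min_eq_right hu, max_eq_right hl]

lemma exists_boundedVariationOn_univ_eqOn (hf : BoundedVariationOn f s) :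
    ∃ F : α → ℝ, BoundedVariationOn F univ ∧ EqOn f F s := by
  rcases s.eq_empty_or_nonempty with rfl | ⟨c, hc⟩
  · exact ⟨fun _ ↦ 0, monotoneOn_const.boundedVariationOn (C := 0) (by simp), eqOn_empty _ _⟩
  have hloc := hf.locallyBoundedVariationOn
  have p_le (x) : |variationOnFromTo f s c x| ≤ (eVariationOn f s).toReal :=
    variationOnFromTo.abs_le_eVariationOn hf
  have f_le (x) (hx : x ∈ s) : |f x| ≤ |f c| + (eVariationOn f s).toReal := by
    have := hf.dist_le hx hc
    rw [Real.dist_eq] at this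
    linarith [abs_sub_abs_le_abs_sub (f x) (f c)]
  obtain ⟨P, hP, hPs⟩ := exists_boundedVariationOn_univ_eqOn_of_monotoneOn
    (variationOnFromTo.monotoneOn hloc hc) fun x _ ↦ p_le x
  obtain ⟨Q, hQ, hQs⟩ := exists_boundedVariationOn_univ_eqOn_of_monotoneOn
    (variationOnFromTo.sub_self_monotoneOn hloc hc)
    fun x hx ↦ (abs_sub _ _).trans (add_le_add (p_le x) (f_le x hx))
  refine ⟨P - Q, boundedVariationOn_sub hP hQ, fun x hx ↦ ?_⟩
  rw [Pi.sub_apply, ← hPs hx, ← hQs hx, Pi.sub_apply, sub_sub_cancel]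

lemma boundedVariationOn_indicator_one_of_isUpperSet (hs : IsUpperSet s) :
    BoundedVariationOn (s.indicator 1 : α → ℝ) univ := by
  refine MonotoneOn.boundedVariationOn (C := 1) (fun x _ y _ hxy ↦ ?_) fun x _ ↦ ?_
  · by_cases hx : x ∈ s
    · simp only [indicator_of_mem hx, indicator_of_mem (hs hxy hx), Pi.one_apply, le_refl]
    · rw [indicator_of_notMem hx]
      exact indicator_nonneg (fun _ _ ↦ zero_le_one) y
  · by_cases hx : x ∈ s <;> simp [hx]

lemma boundedVariationOn_union (hs : BoundedVariationOn f s) (ht : BoundedVariationOn f t)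
    (hst : ∀ x ∈ s, ∀ y ∈ t, x ≤ y) : BoundedVariationOn f (s ∪ t) := by
  obtain ⟨F, hF, hFs⟩ := exists_boundedVariationOn_univ_eqOn hs
  obtain ⟨G, hG, hGt⟩ := exists_boundedVariationOn_univ_eqOn ht
  set U : Set α := {x | ∀ y ∈ s, y < x} with hU
  have hU_upper : IsUpperSet U := fun x y hxy hx z hz ↦ (hx z hz).trans_le hxy
  have glued : BoundedVariationOn (F - (F - G) * U.indicator 1) univ :=
    boundedVariationOn_sub hF ((boundedVariationOn_sub hF hG).mul
      (boundedVariationOn_indicator_one_of_isUpperSet hU_upper))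
  have f_eq : EqOn f (F - (F - G) * U.indicator 1) (s ∪ t) := by
    intro x hx
    by_cases hxU : x ∈ U
    · have hxt : x ∈ t := hx.resolve_left fun h ↦ (hxU x h).false
      simp [hxU, hGt hxt]
    · have hxs : x ∈ s := by
        obtain ⟨y, hy, hxy⟩ : ∃ y ∈ s, x ≤ y := by simpa [hU] using hxU
        exact hx.elim id fun hxt ↦ hxy.antisymm (hst y hy x hxt) ▸ hy
      simp [hxU, hFs hxs]
  rw [BoundedVariationOn, eVariationOn.congr f_eq]
  exact glued.mono (subset_univ _)

lemma boundedVariationOn_indicator (hf : BoundedVariationOn f s) (hs : s.OrdConnected) :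
    BoundedVariationOn (s.indicator f) univ := by
  obtain ⟨F, hF, hFs⟩ := exists_boundedVariationOn_univ_eqOn hf
  have hU : IsUpperSet ((upperClosure s : Set α) \ s) := by
    rintro x y hxy ⟨hx, hxs⟩
    refine ⟨(upperClosure s).upper hxy hx, fun hys ↦ hxs ?_⟩
    obtain ⟨z, hz, hzx⟩ := hx
    exact hs.out hz hys ⟨hzx, hxy⟩
  have glued := hF.mul (boundedVariationOn_sub
    (boundedVariationOn_indicator_one_of_isUpperSet (upperClosure s).upper)
    (boundedVariationOn_indicator_one_of_isUpperSet hU))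
  convert glued using 1
  ext x
  by_cases hx : x ∈ s
  · simp [hx, hFs hx, subset_upperClosure hx]
  · by_cases hx' : x ∈ upperClosure s <;> simp_all

end BoundedVariation

section RealLine

variable {f : ℝ → ℝ} {a b : ℝ}

lemma intervalIntegrable_of_boundedVariationOn (hf : BoundedVariationOn f (uIcc a b)) :
    IntervalIntegrable f volume a b := by
  obtain ⟨p, q, hp, hq, rfl⟩ := hf.locallyBoundedVariationOn.exists_monotoneOn_sub_monotoneOn
  exact hp.intervalIntegrable.sub hq.intervalIntegrable

lemma boundedVariationOn_Icc_of_Ioo (hf : BoundedVariationOn f (Ioo a b)) :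
    BoundedVariationOn f (Icc a b) := by
  rcases le_or_gt a b with hab | hab
  · rw [← Ico_union_right hab]
    refine boundedVariationOn_union ?_ (.of_subsingleton subsingleton_singleton) ?_
    · rcases hab.eq_or_lt with rfl | hab
      · simp
      rw [← Ioo_union_left hab, union_comm]
      exact boundedVariationOn_union (.of_subsingleton subsingleton_singleton) hf (by grind)
    · grind
  · rw [Icc_eq_empty hab.not_ge]
    exact .of_subsingleton subsingleton_empty

lemma boundedVariationOn_Icc_of_lipschitzOnWith_Ioo {K : NNReal}
    (hf : LipschitzOnWith K f (Ioo a b)) : BoundedVariationOn f (Icc a b) :=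
  boundedVariationOn_Icc_of_Ioo <| hf.comp_boundedVariationOn (mapsTo_id _)
    ((BoundedVariationOn.id_Icc a b).mono Ioo_subset_Icc_self)

lemma boundedVariationOn_Icc_of_forall_lt {t : ℕ → ℝ} {N : ℕ} (ht : ∀ i < N, t i ≤ t (i + 1))
    (hf : ∀ i < N, BoundedVariationOn f (Icc (t i) (t (i + 1)))) :
    BoundedVariationOn f (Icc (t 0) (t N)) := by
  have ht_mono {k : ℕ} (hk : k ≤ N) : t 0 ≤ t k := by
    induction k with
    | zero => rfl
    | succ k ih => exact (ih (by lia)).trans (ht k hk)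
  suffices ∀ k ≤ N, BoundedVariationOn f (Icc (t 0) (t k)) from this N le_rfl
  intro k hk
  induction k with
  | zero => exact .of_subsingleton (by simp)
  | succ k ih =>
    rw [← Icc_union_Icc_eq_Icc (ht_mono (Nat.le_of_succ_le hk)) (ht k hk)]
    exact boundedVariationOn_union (ih (by lia)) (hf k hk) fun x hx y hy ↦ hx.2.trans hy.1

lemma abs_mul_sub_integral_le {c : ℝ} (hc : c ∈ Icc a b) (hf : BoundedVariationOn f (Icc a b)) :
    |(b - a) * f c - ∫ u in a..b, f u| ≤ (b - a) * (eVariationOn f (Icc a b)).toReal := by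
  have hab : a ≤ b := hc.1.trans hc.2
  have integral_sub : ∫ u in a..b, (f c - f u) = (b - a) * f c - ∫ u in a..b, f u := by
    rw [intervalIntegral.integral_sub intervalIntegrable_const
        (intervalIntegrable_of_boundedVariationOn (by rwa [uIcc_of_le hab])),
      intervalIntegral.integral_const, smul_eq_mul]
  rw [← integral_sub, mul_comm, ← Real.norm_eq_abs, ← abs_of_nonneg (sub_nonneg.2 hab)]
  refine intervalIntegral.norm_integral_le_of_norm_le_const fun u hu ↦ ?_
  rw [uIoc_of_le hab] at hu
  exact (Real.dist_eq _ _).symm.trans_le (hf.dist_le hc (Ioc_subset_Icc_self hu))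

lemma abs_sum_sub_integral_le {x c : ℕ → ℝ} (hc : ∀ j, c j ∈ Icc (x j) (x (j + 1))) {δ : ℝ}
    (hδ : ∀ j, x (j + 1) - x j ≤ δ) {n : ℕ} (hf : BoundedVariationOn f (Icc (x 0) (x n))) :
    |∑ j ∈ Finset.range n, (x (j + 1) - x j) * f (c j) - ∫ u in x 0..x n, f u|
      ≤ δ * (eVariationOn f (Icc (x 0) (x n))).toReal := by
  have hx : Monotone x := monotone_nat_of_le_succ fun j ↦ (hc j).1.trans (hc j).2
  have cell_bv {j : ℕ} (hj : j < n) : BoundedVariationOn f (Icc (x j) (x (j + 1))) :=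
    hf.mono (Icc_subset_Icc (hx j.zero_le) (hx hj))
  have cell_integrable {j : ℕ} (hj : j < n) : IntervalIntegrable f volume (x j) (x (j + 1)) :=
    intervalIntegrable_of_boundedVariationOn (by rw [uIcc_of_le (hx j.le_succ)]; exact cell_bv hj)
  rw [← intervalIntegral.sum_integral_adjacent_intervals (a := x) (n := n)
      fun j hj ↦ cell_integrable hj, ← Finset.sum_sub_distrib, ← eVariationOn.sum' f hx,
    ENNReal.toReal_sum fun j hj ↦ cell_bv (Finset.mem_range.1 hj), Finset.mul_sum]
  refine (Finset.abs_sum_le_sum_abs _ _).trans (Finset.sum_le_sum fun j hj ↦ ?_)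
  refine (abs_mul_sub_integral_le (hc j) (cell_bv (Finset.mem_range.1 hj))).trans ?_
  gcongr
  exact hδ j

/-- The total variation of `f : ℝ → ℝ` on the whole line. It is `0` by convention when the
variation is infinite. -/
noncomputable def totalVariation (f : ℝ → ℝ) : ℝ := (eVariationOn f univ).toReal

lemma totalVariation_nonneg : 0 ≤ totalVariation f := ENNReal.toReal_nonneg

lemma abs_sum_Ico_sub_integral_le (hf : BoundedVariationOn f univ) {h : ℝ} (hh : 0 ≤ h) (a : ℝ)
    {p q : ℕ} (hpq : p ≤ q) :
    |h * ∑ j ∈ Finset.Ico p q, f (h * j - a) - ∫ u in h * p - a..h * q - a, f u|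
      ≤ h * totalVariation f := by
  set x : ℕ → ℝ := fun j ↦ h * (p + j : ℕ) - a with hx_def
  have hx : Monotone x := fun i j hij ↦ by simp only [hx_def]; gcongr
  have key := abs_sum_sub_integral_le (f := f) (x := x) (c := x)
    (fun j ↦ ⟨le_rfl, hx j.le_succ⟩) (δ := h) (fun j ↦ by simp only [hx_def]; push_cast; linarith)
    (n := q - p) (hf.mono (subset_univ _))
  have variation_le : (eVariationOn f (Icc (x 0) (x (q - p)))).toReal ≤ totalVariation f :=
    ENNReal.toReal_mono hf (eVariationOn.mono f (subset_univ _))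
  rw [Finset.sum_Ico_eq_sum_range, Finset.mul_sum]
  refine le_trans (le_of_eq ?_) (key.trans (by gcongr))
  congr 2
  · refine Finset.sum_congr rfl fun j _ ↦ ?_
    simp only [hx_def]
    push_cast
    ring_nf
  · simp only [hx_def, add_zero, Nat.add_sub_cancel' hpq]

end RealLine

section Kernel

lemma integral_eq_integral_of_forall_notMem {f : ℝ → ℝ} {a b p q : ℝ}
    (hf : ∀ x, x ∉ Icc a b → f x = 0) (hp : p ≤ a) (hab : a ≤ b) (hq : b ≤ q) :
    ∫ x in p..q, f x = ∫ x in a..b, f x := by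
  rw [intervalIntegral.integral_of_le hab, intervalIntegral.integral_of_le (by linarith),
    ← integral_Icc_eq_integral_Ioc, ← integral_Icc_eq_integral_Ioc]
  exact setIntegral_eq_of_subset_of_forall_sdiff_eq_zero measurableSet_Icc
    (Icc_subset_Icc hp hq) fun x hx ↦ hf x hx.2

lemma integral_mul_comp_sub_one {f : ℝ → ℝ} (hf : ∀ x, x ∉ Icc (0 : ℝ) 2 → f x = 0) {ε : ℝ}
    (hε : ∀ x, f (2 - x) = ε * f x) {p q : ℝ} (hp : p ≤ 1) (hq : 2 ≤ q) :
    ∫ x in p..q, f x * f (x - 1) = ε * ∫ u in (0 : ℝ)..1, f u * f (1 - u) := by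
  have off_overlap (x : ℝ) (hx : x ∉ Icc (1 : ℝ) 2) : f x * f (x - 1) = 0 := by
    rcases le_or_gt x 2 with h | h
    · rw [hf (x - 1) (by grind), mul_zero]
    · rw [hf x (by grind), zero_mul]
  calc ∫ x in p..q, f x * f (x - 1)
      = ∫ x in (1 : ℝ)..2, f x * f (x - 1) :=
        integral_eq_integral_of_forall_notMem off_overlap hp one_le_two hq
    _ = ∫ u in (0 : ℝ)..1, f (u + 1) * f u := by
        simpa only [zero_add, one_add_one_eq_two, add_sub_cancel_right] using
          (intervalIntegral.integral_comp_add_right (a := 0) (b := 1)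
            (fun x ↦ f x * f (x - 1)) 1).symm
    _ = ε * ∫ u in (0 : ℝ)..1, f u * f (1 - u) := by
        rw [← intervalIntegral.integral_const_mul]
        refine intervalIntegral.integral_congr fun u _ ↦ ?_
        rw [show u + 1 = 2 - (1 - u) by ring, hε]
        ring

/-- A weight function on the whole line, as used in pre-averaging: it has bounded variation, is
supported in `[0, 2]` and is antisymmetric about `1`. -/
structure IsKernel (g : ℝ → ℝ) : Prop where
  boundedVariationOn : BoundedVariationOn g univ
  eq_zero : ∀ x, x ∉ Icc (0 : ℝ) 2 → g x = 0
  antisymm : ∀ x, g (2 - x) = -g x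

lemma isKernel_indicator {lam : ℝ → ℝ} (hlam : BoundedVariationOn lam (Icc 0 2))
    (hanti : ∀ t ∈ Icc (0 : ℝ) 1, lam t = -lam (2 - t)) :
    IsKernel ((Icc 0 2).indicator lam) where
  boundedVariationOn := boundedVariationOn_indicator hlam ordConnected_Icc
  eq_zero x hx := indicator_of_notMem hx lam
  antisymm x := by
    have mem_iff : 2 - x ∈ Icc (0 : ℝ) 2 ↔ x ∈ Icc (0 : ℝ) 2 := by
      simp only [mem_Icc]; constructor <;> rintro ⟨h₁, h₂⟩ <;> constructor <;> linarith
    by_cases hx : x ∈ Icc (0 : ℝ) 2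
    · rw [indicator_of_mem hx, indicator_of_mem (mem_iff.2 hx)]
      rcases le_total x 1 with hx1 | hx1
      · rw [hanti x ⟨hx.1, hx1⟩, neg_neg]
      · rw [hanti (2 - x) ⟨by linarith [hx.2], by linarith⟩, sub_sub_cancel]
    · rw [indicator_of_notMem hx, indicator_of_notMem (mt mem_iff.1 hx), neg_zero]

variable {g : ℝ → ℝ}

lemma IsKernel.intervalIntegrable (hg : IsKernel g) (a b : ℝ) : IntervalIntegrable g volume a b :=
  intervalIntegrable_of_boundedVariationOn (hg.boundedVariationOn.mono (subset_univ _))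

lemma IsKernel.bigLam_two_sub (hg : IsKernel g) (x : ℝ) :
    bigLam g (2 - x) = bigLam g x - bigLam g 2 := by
  have reflected : ∫ v in 0..2 - x, g v = ∫ v in x..2, g (2 - v) := by
    rw [intervalIntegral.integral_comp_sub_left g 2, sub_self]
  have split := intervalIntegral.integral_add_adjacent_intervals
    (hg.intervalIntegrable 0 x) (hg.intervalIntegrable x 2)
  simp only [bigLam, reflected, hg.antisymm, intervalIntegral.integral_neg]
  linarith

lemma IsKernel.bigLam_two (hg : IsKernel g) : bigLam g 2 = 0 := by
  have h0 : bigLam g 0 = 0 := by simp [bigLam]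
  have h2 := hg.bigLam_two_sub 0
  rw [sub_zero, h0] at h2
  linarith

lemma IsKernel.bigLam_symm (hg : IsKernel g) (x : ℝ) : bigLam g (2 - x) = bigLam g x := by
  rw [hg.bigLam_two_sub, hg.bigLam_two, sub_zero]

lemma IsKernel.bigLam_eq_zero (hg : IsKernel g) {x : ℝ} (hx : x ∉ Icc (0 : ℝ) 2) :
    bigLam g x = 0 := by
  have of_neg {y : ℝ} (hy : y < 0) : bigLam g y = 0 := by
    have h2 : ∫ v in y..2, g v = ∫ v in (0 : ℝ)..2, g v :=
      integral_eq_integral_of_forall_notMem hg.eq_zero hy.le zero_le_two le_rfl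
    have split := intervalIntegral.integral_add_adjacent_intervals
      (hg.intervalIntegrable 0 y) (hg.intervalIntegrable y 2)
    rw [bigLam]
    linarith
  rcases lt_or_ge x 0 with h | h
  · exact of_neg h
  · rw [← hg.bigLam_symm]
    exact of_neg (by grind)

lemma IsKernel.integral_eq_bigLam (hg : IsKernel g) (x : ℝ) {q : ℝ} (hq : 2 < q) :
    ∫ v in x..q, g v = bigLam g x := by
  have split := intervalIntegral.integral_add_adjacent_intervals
    (hg.intervalIntegrable 0 x) (hg.intervalIntegrable x q)
  have hq0 := hg.bigLam_eq_zero (x := q) (by grind)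
  simp only [bigLam] at hq0 ⊢
  linarith

lemma IsKernel.boundedVariationOn_bigLam (hg : IsKernel g) :
    BoundedVariationOn (bigLam g) univ := by
  have ac : AbsolutelyContinuousOnInterval (bigLam g) 0 2 :=
    ((hg.intervalIntegrable 0 2).absolutelyContinuousOnInterval_intervalIntegral left_mem_uIcc).neg
  rw [← (indicator_eq_self (s := Icc (0 : ℝ) 2) (f := bigLam g)).2 ?_]
  · refine boundedVariationOn_indicator ?_ ordConnected_Icc
    rw [← uIcc_of_le zero_le_two]
    exact ac.boundedVariationOn
  · exact fun x hx ↦ by_contra fun h ↦ hx (hg.bigLam_eq_zero h)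

end Kernel

section Model

lemma preAvg_eq_sum_indicator {Ω : Type*} (lam : ℝ → ℝ) (n : ℕ) {m : ℕ} (hm : 0 < m)
    (A : ℕ → Ω → ℝ) (i : ℕ) :
    preAvg lam n m A i = fun ω ↦ (m : ℝ) / n * ∑ j ∈ Finset.range (n + 1),
      (Icc 0 2).indicator lam ((m : ℝ) / n * j - ((i : ℝ) - 2)) * A j ω := by
  have mem_block_iff (j : ℕ) : (((i : ℝ) - 2) / m ≤ (j : ℝ) / n ∧ (j : ℝ) / n ≤ (i : ℝ) / m) ↔
      (m : ℝ) / n * j - ((i : ℝ) - 2) ∈ Icc (0 : ℝ) 2 := by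
    rw [mem_Icc, div_le_iff₀ (by positivity), le_div_iff₀ (by positivity), div_mul_comm, sub_nonneg]
    exact and_congr_right' (by constructor <;> intro <;> linarith)
  ext ω
  rw [preAvg, blockIdx, Finset.sum_filter]
  congr 1
  refine Finset.sum_congr rfl fun j _ ↦ ?_
  simp only [mem_block_iff, indicator, ite_mul, zero_mul, mul_div_right_comm]

lemma sum_sum_mul_mul_min (n : ℕ) (φ ψ : ℕ → ℝ) :
    ∑ j ∈ Finset.range (n + 1), ∑ l ∈ Finset.range (n + 1), φ j * ψ l * (min j l : ℕ)
      = ∑ k ∈ Finset.Ico 1 (n + 1),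
        (∑ j ∈ Finset.Ico k (n + 1), φ j) * ∑ l ∈ Finset.Ico k (n + 1), ψ l := by
  have tail_eq (k : ℕ) (χ : ℕ → ℝ) : ∑ j ∈ Finset.Ico k (n + 1), χ j
      = ∑ j ∈ Finset.range (n + 1), if k ≤ j then χ j else 0 := by
    rw [← Finset.sum_filter]
    congr 1
    grind
  have card_eq {j l : ℕ} (hj : j ∈ Finset.range (n + 1)) (hl : l ∈ Finset.range (n + 1)) :
      ∑ k ∈ Finset.Ico 1 (n + 1), ((if k ≤ j then φ j else 0) * if k ≤ l then ψ l else 0)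
        = φ j * ψ l * (min j l : ℕ) := by
    have filter_eq : {k ∈ Finset.Ico 1 (n + 1) | k ≤ j ∧ k ≤ l} = Finset.Icc 1 (min j l) := by
      grind
    simp only [ite_zero_mul_ite_zero, ← Finset.sum_filter, filter_eq, Finset.sum_const,
      Nat.card_Icc, add_tsub_cancel_right, nsmul_eq_mul, mul_comm]
  calc ∑ j ∈ Finset.range (n + 1), ∑ l ∈ Finset.range (n + 1), φ j * ψ l * (min j l : ℕ)
      = ∑ j ∈ Finset.range (n + 1), ∑ l ∈ Finset.range (n + 1), ∑ k ∈ Finset.Ico 1 (n + 1),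
          ((if k ≤ j then φ j else 0) * if k ≤ l then ψ l else 0) :=
        Finset.sum_congr rfl fun j hj ↦ Finset.sum_congr rfl fun l hl ↦ (card_eq hj hl).symm
    _ = ∑ k ∈ Finset.Ico 1 (n + 1), ∑ j ∈ Finset.range (n + 1), ∑ l ∈ Finset.range (n + 1),
          ((if k ≤ j then φ j else 0) * if k ≤ l then ψ l else 0) :=
        (Finset.sum_congr rfl fun _ _ ↦ Finset.sum_comm).trans Finset.sum_comm
    _ = _ := Finset.sum_congr rfl fun k _ ↦ by rw [tail_eq, tail_eq, Finset.sum_mul_sum]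

/-- The second-order content of the observation model: up to time `n`, `W` has the covariances of
Brownian motion on the grid `j / n`, and `η` is a normalized white noise uncorrelated with `W`.
No distributional assumption is made. -/
structure IsSecondOrderModel {Ω : Type*} [MeasurableSpace Ω] (μ : Measure Ω) (n : ℕ)
    (W η : ℕ → Ω → ℝ) : Prop where
  memLp_signal : ∀ j ≤ n, MemLp (W j) 2 μ
  memLp_noise : ∀ j ≤ n, MemLp (η j) 2 μ
  cov_signal : ∀ j ≤ n, ∀ l ≤ n, cov[W j, W l; μ] = (min j l : ℕ) / n
  cov_noise : ∀ j ≤ n, ∀ l ≤ n, cov[η j, η l; μ] = if j = l then 1 else 0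
  cov_signal_noise : ∀ j ≤ n, ∀ l ≤ n, cov[W j, η l; μ] = 0

variable {Ω : Type*} [MeasurableSpace Ω] {μ : Measure Ω} {n : ℕ} {W η : ℕ → Ω → ℝ}

lemma IsSecondOrderModel.memLp_obs (hmodel : IsSecondOrderModel μ n W η) (σ τ : ℝ) {j : ℕ}
    (hj : j ≤ n) : MemLp (obs σ τ W η j) 2 μ :=
  ((hmodel.memLp_signal j hj).const_mul σ).add ((hmodel.memLp_noise j hj).const_mul τ)

lemma IsSecondOrderModel.memLp_preAvg (hmodel : IsSecondOrderModel μ n W η) (σ τ : ℝ)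
    (lam : ℝ → ℝ) (m i : ℕ) : MemLp (preAvg lam n m (obs σ τ W η) i) 2 μ :=
  (memLp_finsetSum _ fun _ hj ↦ (hmodel.memLp_obs σ τ
    (Finset.mem_range_succ_iff.1 (Finset.mem_of_mem_filter _ hj))).const_mul _).const_mul _

lemma IsSecondOrderModel.cov_obs [IsFiniteMeasure μ] (hmodel : IsSecondOrderModel μ n W η)
    (σ τ : ℝ) {j l : ℕ} (hj : j ≤ n) (hl : l ≤ n) :
    cov[obs σ τ W η j, obs σ τ W η l; μ]
      = σ ^ 2 / n * (min j l : ℕ) + if j = l then τ ^ 2 else 0 := by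
  have obs_eq (k : ℕ) : obs σ τ W η k = σ • W k + τ • η k := rfl
  have hW {k : ℕ} (hk : k ≤ n) : MemLp (σ • W k) 2 μ := (hmodel.memLp_signal k hk).const_smul σ
  have hη {k : ℕ} (hk : k ≤ n) : MemLp (τ • η k) 2 μ := (hmodel.memLp_noise k hk).const_smul τ
  rw [obs_eq, obs_eq, covariance_add_left (hW hj) (hη hj) ((hW hl).add (hη hl)),
    covariance_add_right (hW hj) (hW hl) (hη hl), covariance_add_right (hη hj) (hW hl) (hη hl)]
  simp only [covariance_smul_left, covariance_smul_right, covariance_comm (η j) (W l),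
    hmodel.cov_signal j hj l hl, hmodel.cov_noise j hj l hl, hmodel.cov_signal_noise j hj l hl,
    hmodel.cov_signal_noise l hl j hj]
  split_ifs <;> ring

lemma IsSecondOrderModel.cov_sum_mul_obs [IsFiniteMeasure μ] (hmodel : IsSecondOrderModel μ n W η)
    (σ τ : ℝ) (φ ψ : ℕ → ℝ) :
    cov[fun ω ↦ ∑ j ∈ Finset.range (n + 1), φ j * obs σ τ W η j ω,
        fun ω ↦ ∑ l ∈ Finset.range (n + 1), ψ l * obs σ τ W η l ω; μ]
      = σ ^ 2 / n * ∑ k ∈ Finset.Ico 1 (n + 1),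
          (∑ j ∈ Finset.Ico k (n + 1), φ j) * ∑ l ∈ Finset.Ico k (n + 1), ψ l
        + τ ^ 2 * ∑ j ∈ Finset.range (n + 1), φ j * ψ j := by
  have memLp (χ : ℕ → ℝ) : ∀ j ∈ Finset.range (n + 1),
      MemLp (fun ω ↦ χ j * obs σ τ W η j ω) 2 μ := fun j hj ↦
    (hmodel.memLp_obs σ τ (Finset.mem_range_succ_iff.1 hj)).const_mul _
  rw [covariance_fun_sum_fun_sum' (memLp φ) (memLp ψ), ← sum_sum_mul_mul_min, Finset.mul_sum,
    Finset.mul_sum, ← Finset.sum_add_distrib]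
  refine Finset.sum_congr rfl fun j hj ↦ ?_
  calc ∑ l ∈ Finset.range (n + 1),
        cov[fun ω ↦ φ j * obs σ τ W η j ω, fun ω ↦ ψ l * obs σ τ W η l ω; μ]
      = ∑ l ∈ Finset.range (n + 1), (σ ^ 2 / n * (φ j * ψ l * (min j l : ℕ))
          + if j = l then τ ^ 2 * (φ j * ψ l) else 0) := by
        refine Finset.sum_congr rfl fun l hl ↦ ?_
        rw [covariance_const_mul_left, covariance_const_mul_right, hmodel.cov_obs σ τ
          (Finset.mem_range_succ_iff.1 hj) (Finset.mem_range_succ_iff.1 hl)]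
        split_ifs <;> ring
    _ = _ := by
        rw [Finset.sum_add_distrib, ← Finset.mul_sum, Finset.sum_ite_eq, if_pos hj]

end Model

section Gaussian

lemma memLp_two_of_map_eq_gaussianReal {Ω : Type*} [MeasurableSpace Ω] {μ : Measure Ω}
    {X : Ω → ℝ} (hX : AEMeasurable X μ) {a : ℝ} {v : NNReal} (h : μ.map X = gaussianReal a v) :
    MemLp X 2 μ := by
  have := memLp_id_gaussianReal (μ := a) (v := v) 2
  rw [← h] at this
  exact (memLp_map_measure_iff (by fun_prop) hX).1 this

lemma integral_of_map_eq_gaussianReal {Ω : Type*} [MeasurableSpace Ω] {μ : Measure Ω}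
    {X : Ω → ℝ} (hX : AEMeasurable X μ) {a : ℝ} {v : NNReal} (h : μ.map X = gaussianReal a v) :
    ∫ ω, X ω ∂μ = a := by
  rw [← integral_map (f := fun x : ℝ ↦ x) hX (by fun_prop), h, integral_id_gaussianReal]

variable {Ω : Type*} [MeasureSpace Ω] {n : ℕ} {W η : ℕ → Ω → ℝ}

lemma exists_map_signal_eq_gaussianReal (hmodel : IsSimplifiedModel n W η) {j : ℕ} (hj : j ≤ n) :
    ∃ v, Measure.map (W j) ℙ = gaussianReal 0 v := by
  obtain ⟨v, hv⟩ := hmodel.2.2.1 (Pi.single j 1) 0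
  refine ⟨v, hv ▸ ?_⟩
  congr with ω
  simp [Pi.single_apply, Nat.lt_succ_of_le hj]

lemma exists_map_noise_eq_gaussianReal (hmodel : IsSimplifiedModel n W η) {j : ℕ} (hj : j ≤ n) :
    ∃ v, Measure.map (η j) ℙ = gaussianReal 0 v := by
  obtain ⟨v, hv⟩ := hmodel.2.2.1 0 (Pi.single j 1)
  refine ⟨v, hv ▸ ?_⟩
  congr with ω
  simp [Pi.single_apply, Nat.lt_succ_of_le hj]

lemma isSecondOrderModel_of_isSimplifiedModel [IsProbabilityMeasure (ℙ : Measure Ω)]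
    (hmodel : IsSimplifiedModel n W η) : IsSecondOrderModel ℙ n W η := by
  have ⟨hW, hη, _, hWW, hηη, hWη⟩ := hmodel
  have signal {j : ℕ} (hj : j ≤ n) : MemLp (W j) 2 ℙ ∧ ∫ ω, W j ω = 0 :=
    have ⟨_, hv⟩ := exists_map_signal_eq_gaussianReal hmodel hj
    ⟨memLp_two_of_map_eq_gaussianReal (hW j).aemeasurable hv,
      integral_of_map_eq_gaussianReal (hW j).aemeasurable hv⟩
  have noise {j : ℕ} (hj : j ≤ n) : MemLp (η j) 2 ℙ ∧ ∫ ω, η j ω = 0 :=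
    have ⟨_, hv⟩ := exists_map_noise_eq_gaussianReal hmodel hj
    ⟨memLp_two_of_map_eq_gaussianReal (hη j).aemeasurable hv,
      integral_of_map_eq_gaussianReal (hη j).aemeasurable hv⟩
  have cov_eq {X Y : Ω → ℝ} (hX : MemLp X 2 ℙ ∧ ∫ ω, X ω = 0) (hY : MemLp Y 2 ℙ ∧ ∫ ω, Y ω = 0) :
      cov[X, Y; ℙ] = ∫ ω, X ω * Y ω := by
    rw [covariance_eq_sub hX.1 hY.1, hX.2, zero_mul, sub_zero]
    rfl
  exact {
    memLp_signal := fun j hj ↦ (signal hj).1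
    memLp_noise := fun j hj ↦ (noise hj).1
    cov_signal := fun j hj l hl ↦ by
      rw [cov_eq (signal hj) (signal hl), hWW j l hj hl, Nat.cast_min]
    cov_noise := fun j hj l hl ↦ by rw [cov_eq (noise hj) (noise hl), hηη j l hj hl]
    cov_signal_noise := fun j hj l hl ↦ by rw [cov_eq (signal hj) (noise hl), hWη j l hj hl] }

end Gaussian

section Perturbation

lemma abs_sum_mul_sub_sum_mul_le {ι : Type*} (s : Finset ι) {A B F G : ι → ℝ} {ε : ℝ}
    (hA : ∀ k ∈ s, |A k - F k| ≤ ε) (hB : ∀ k ∈ s, |B k - G k| ≤ ε) :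
    |∑ k ∈ s, A k * B k - ∑ k ∈ s, F k * G k|
      ≤ ε * (∑ k ∈ s, |F k| + ∑ k ∈ s, |G k|) + s.card * ε ^ 2 := by
  have term_le {k : ι} (hk : k ∈ s) :
      |A k * B k - F k * G k| ≤ ε * (|F k| + |G k|) + ε ^ 2 := by
    have hε : 0 ≤ ε := (abs_nonneg _).trans (hA k hk)
    calc |A k * B k - F k * G k|
        = |F k * (B k - G k) + G k * (A k - F k) + (A k - F k) * (B k - G k)| := by ring_nf
      _ ≤ |F k| * |B k - G k| + |G k| * |A k - F k| + |A k - F k| * |B k - G k| := by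
          simp only [← abs_mul]
          exact abs_add_three _ _ _
      _ ≤ |F k| * ε + |G k| * ε + ε * ε := by
          gcongr
          exacts [hB k hk, hA k hk, hA k hk, hB k hk]
      _ = ε * (|F k| + |G k|) + ε ^ 2 := by ring
  rw [← Finset.sum_sub_distrib]
  calc |∑ k ∈ s, (A k * B k - F k * G k)|
      ≤ ∑ k ∈ s, |A k * B k - F k * G k| := Finset.abs_sum_le_sum_abs _ _
    _ ≤ ∑ k ∈ s, (ε * (|F k| + |G k|) + ε ^ 2) := Finset.sum_le_sum fun _ hk ↦ term_le hk
    _ = ε * (∑ k ∈ s, |F k| + ∑ k ∈ s, |G k|) + s.card * ε ^ 2 := by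
        rw [Finset.sum_add_distrib, ← Finset.mul_sum, Finset.sum_add_distrib, Finset.sum_const,
          nsmul_eq_mul]

end Perturbation

section RiemannSums

/-- The Riemann sum of mesh `h`, with nodes `h * k - a`, for the integral of `Λ(x) Λ(x - 1)`, where
`Λ` itself is replaced by the tail Riemann sums of `g`. Up to a factor `σ² / m`, this is the
contribution of Brownian motion to the covariance of adjacent pre-averaged observations. -/
noncomputable def signalSum (g : ℝ → ℝ) (h a : ℝ) (n : ℕ) : ℝ :=
  h * ∑ k ∈ Finset.Ico 1 (n + 1), (h * ∑ j ∈ Finset.Ico k (n + 1), g (h * j - a)) *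
    (h * ∑ j ∈ Finset.Ico k (n + 1), g (h * j - a - 1))

/-- The Riemann sum of mesh `h`, with nodes `h * j - a`, for the integral of `g(x) g(x - 1)`. Up to
a factor `τ² h`, this is the contribution of the noise to the covariance of adjacent pre-averaged
observations. -/
noncomputable def noiseSum (g : ℝ → ℝ) (h a : ℝ) (n : ℕ) : ℝ :=
  h * ∑ j ∈ Finset.range (n + 1), g (h * j - a) * g (h * j - a - 1)

variable {f g : ℝ → ℝ} {h a D : ℝ} {n p q : ℕ}

lemma boundedVariationOn_abs (hf : BoundedVariationOn f univ) :
    BoundedVariationOn (fun x ↦ |f x|) univ :=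
  (lipschitzWith_one_norm (E := ℝ)).comp_boundedVariationOn hf

lemma boundedVariationOn_mul_comp_sub_one (hf : BoundedVariationOn f univ) :
    BoundedVariationOn (fun x ↦ f x * f (x - 1)) univ :=
  hf.mul <| ne_top_of_le_ne_top hf <| eVariationOn.comp_le_of_monotoneOn f (φ := fun x ↦ x - 1)
    (fun _ _ _ _ hxy ↦ sub_le_sub_right hxy 1) (mapsTo_univ _ _)

lemma mul_sum_abs_le (hf : BoundedVariationOn f univ) (hf0 : ∀ x, x ∉ Icc (0 : ℝ) 2 → f x = 0)
    (hh : 0 ≤ h) (ha : 0 ≤ a) (hq : 2 ≤ h * q - a) :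
    h * ∑ k ∈ Finset.Ico p q, |f (h * k - a)|
      ≤ (∫ x in (0 : ℝ)..2, |f x|) + h * totalVariation (fun x ↦ |f x|) := by
  have approx := abs_sum_Ico_sub_integral_le (boundedVariationOn_abs hf) hh a q.zero_le
  rw [integral_eq_integral_of_forall_notMem (fun x hx ↦ by rw [hf0 x hx, abs_zero])
    (by simpa using ha) zero_le_two hq] at approx
  have subset_le : ∑ k ∈ Finset.Ico p q, |f (h * k - a)| ≤ ∑ k ∈ Finset.Ico 0 q, |f (h * k - a)| :=
    Finset.sum_le_sum_of_subset_of_nonneg (Finset.Ico_subset_Ico_left p.zero_le)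
      fun _ _ _ ↦ abs_nonneg _
  linarith [(abs_le.1 approx).2, mul_le_mul_of_nonneg_left subset_le hh]

lemma abs_lagged_sum_sub_integral_le (hf : BoundedVariationOn f univ)
    (hf0 : ∀ x, x ∉ Icc (0 : ℝ) 2 → f x = 0) {ε : ℝ} (hε : ∀ x, f (2 - x) = ε * f x)
    (hh : 0 ≤ h) (ha : 0 ≤ a) (hq : 2 ≤ h * q - a) :
    |h * ∑ j ∈ Finset.range q, f (h * j - a) * f (h * j - a - 1)
        - ε * ∫ u in (0 : ℝ)..1, f u * f (1 - u)|
      ≤ h * totalVariation (fun x ↦ f x * f (x - 1)) := by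
  have approx := abs_sum_Ico_sub_integral_le (boundedVariationOn_mul_comp_sub_one hf) hh a q.zero_le
  rwa [integral_mul_comp_sub_one hf0 hε (by simp; linarith) hq, ← Finset.range_eq_Ico] at approx

lemma IsKernel.abs_noiseSum_add_integral_le (hg : IsKernel g) (hh : 0 ≤ h) (ha : 0 ≤ a)
    (hn : 2 ≤ h * (n + 1 : ℕ) - a) :
    |noiseSum g h a n + ∫ u in (0 : ℝ)..1, g u * g (1 - u)|
      ≤ h * totalVariation (fun x ↦ g x * g (x - 1)) := by
  have riemann := abs_lagged_sum_sub_integral_le hg.boundedVariationOn hg.eq_zero (ε := -1)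
    (fun x ↦ by rw [hg.antisymm, neg_one_mul]) hh ha hn
  rwa [neg_one_mul, sub_neg_eq_add] at riemann

lemma IsKernel.abs_tail_sum_sub_bigLam_le (hg : IsKernel g) (hh : 0 ≤ h) (hpq : p ≤ q)
    (hq : 2 < h * q - a) :
    |h * ∑ j ∈ Finset.Ico p q, g (h * j - a) - bigLam g (h * p - a)| ≤ h * totalVariation g := by
  have approx := abs_sum_Ico_sub_integral_le hg.boundedVariationOn hh a hpq
  rwa [hg.integral_eq_bigLam _ hq] at approx

lemma IsKernel.abs_sum_tail_mul_tail_sub_le (hg : IsKernel g) (hh : 0 ≤ h) (ha : 0 ≤ a)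
    (hn : 3 < h * (n + 1 : ℕ) - a) :
    |∑ k ∈ Finset.Ico 1 (n + 1), (h * ∑ j ∈ Finset.Ico k (n + 1), g (h * j - a)) *
          (h * ∑ j ∈ Finset.Ico k (n + 1), g (h * j - a - 1))
        - ∑ k ∈ Finset.range (n + 1), bigLam g (h * k - a) * bigLam g (h * k - a - 1)|
      ≤ 2 * totalVariation g * ((∫ x in (0 : ℝ)..2, |bigLam g x|)
          + h * totalVariation (fun x ↦ |bigLam g x|)) + h ^ 2 * n * totalVariation g ^ 2 := by
  have drop_first : ∑ k ∈ Finset.range (n + 1), bigLam g (h * k - a) * bigLam g (h * k - a - 1)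
      = ∑ k ∈ Finset.Ico 1 (n + 1), bigLam g (h * k - a) * bigLam g (h * k - a - 1) := by
    rw [Finset.range_eq_Ico, Finset.sum_eq_sum_Ico_succ_bot n.succ_pos,
      hg.bigLam_eq_zero (x := h * (0 : ℕ) - a - 1) fun hx ↦ by simp at hx; linarith,
      mul_zero, zero_add]
  have tail_close {b : ℝ} (hb : b ≤ a + 1) : ∀ k ∈ Finset.Ico 1 (n + 1),
      |h * ∑ j ∈ Finset.Ico k (n + 1), g (h * j - b) - bigLam g (h * k - b)|
        ≤ h * totalVariation g :=
    fun k hk ↦ hg.abs_tail_sum_sub_bigLam_le hh (Finset.mem_Ico.1 hk).2.le (by linarith)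
  have sum_abs_le {b : ℝ} (hb : 0 ≤ b) (hba : b ≤ a + 1) :=
    mul_sum_abs_le (p := 1) (q := n + 1) hg.boundedVariationOn_bigLam
      (fun x ↦ hg.bigLam_eq_zero) hh hb (by linarith)
  simp only [sub_sub] at drop_first ⊢
  rw [drop_first]
  refine (abs_sum_mul_sub_sum_mul_le _ (tail_close (by linarith)) (tail_close le_rfl)).trans ?_
  have hV := totalVariation_nonneg (f := g)
  rw [Nat.card_Ico, Nat.add_sub_cancel]
  linarith [mul_le_mul_of_nonneg_left (sum_abs_le ha (by linarith)) hV,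
    mul_le_mul_of_nonneg_left (sum_abs_le (add_nonneg ha zero_le_one) le_rfl) hV]

lemma IsKernel.exists_forall_abs_signalSum_sub_integral_le (hg : IsKernel g) (D : ℝ) :
    ∃ C, ∀ {h a : ℝ} {n : ℕ}, 0 ≤ h → h ≤ D → h ^ 2 * n ≤ D → 0 ≤ a →
      3 < h * (n + 1 : ℕ) - a →
      |signalSum g h a n - ∫ u in (0 : ℝ)..1, bigLam g u * bigLam g (1 - u)| ≤ h * C := by
  refine ⟨2 * totalVariation g * ((∫ x in (0 : ℝ)..2, |bigLam g x|)
    + D * totalVariation (fun x ↦ |bigLam g x|)) + D * totalVariation g ^ 2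
    + totalVariation (fun x ↦ bigLam g x * bigLam g (x - 1)), fun {h a n} hh hhD hhn ha hn ↦ ?_⟩
  have tails := hg.abs_sum_tail_mul_tail_sub_le hh ha hn
  have riemann := abs_lagged_sum_sub_integral_le hg.boundedVariationOn_bigLam
    (fun x ↦ hg.bigLam_eq_zero) (ε := 1) (fun x ↦ by rw [one_mul, hg.bigLam_symm]) hh ha
    (by linarith)
  have hV := totalVariation_nonneg (f := g)
  have hV' := totalVariation_nonneg (f := fun x ↦ |bigLam g x|)
  rw [one_mul] at riemann
  refine (abs_sub_le _ (h * ∑ k ∈ Finset.range (n + 1), bigLam g (h * k - a) *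
    bigLam g (h * k - a - 1)) _).trans ?_
  rw [signalSum, ← mul_sub, abs_mul, abs_of_nonneg hh, mul_add h]
  gcongr
  exact tails.trans (by gcongr)

end RiemannSums

section Covariance

lemma bigLam_indicator (lam : ℝ → ℝ) {u : ℝ} (hu : u ∈ Icc (0 : ℝ) 2) :
    bigLam ((Icc 0 2).indicator lam) u = bigLam lam u := by
  unfold bigLam
  congr 1
  refine intervalIntegral.integral_congr fun v hv ↦ ?_
  rw [uIcc_of_le hu.1] at hv
  exact indicator_of_mem (Icc_subset_Icc_right hu.2 hv) lam

lemma integral_bigLam_indicator_mul (lam : ℝ → ℝ) :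
    ∫ u in (0 : ℝ)..1,
        bigLam ((Icc 0 2).indicator lam) u * bigLam ((Icc 0 2).indicator lam) (1 - u)
      = ∫ u in (0 : ℝ)..1, bigLam lam u * bigLam lam (1 - u) := by
  refine intervalIntegral.integral_congr fun u hu ↦ ?_
  rw [uIcc_of_le zero_le_one] at hu
  simp only [bigLam_indicator lam (u := u) (by grind), bigLam_indicator lam (u := 1 - u) (by grind)]

lemma integral_indicator_mul (lam : ℝ → ℝ) :
    ∫ u in (0 : ℝ)..1, (Icc 0 2).indicator lam u * (Icc 0 2).indicator lam (1 - u)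
      = ∫ u in (0 : ℝ)..1, lam u * lam (1 - u) := by
  refine intervalIntegral.integral_congr fun u hu ↦ ?_
  rw [uIcc_of_le zero_le_one] at hu
  simp only [indicator_of_mem (by grind : u ∈ Icc (0 : ℝ) 2),
    indicator_of_mem (by grind : 1 - u ∈ Icc (0 : ℝ) 2)]

lemma IsSecondOrderModel.cov_preAvg_succ {Ω : Type*} [MeasurableSpace Ω] {μ : Measure Ω}
    [IsFiniteMeasure μ] {n : ℕ} {W η : ℕ → Ω → ℝ} (hmodel : IsSecondOrderModel μ n W η) (σ τ : ℝ)
    (lam : ℝ → ℝ) {m : ℕ} (hm : 0 < m) (i : ℕ) :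
    cov[preAvg lam n m (obs σ τ W η) i, preAvg lam n m (obs σ τ W η) (i + 1); μ]
      = σ ^ 2 / m * signalSum ((Icc 0 2).indicator lam) (m / n) (i - 2) n
        + τ ^ 2 * (m / n) * noiseSum ((Icc 0 2).indicator lam) (m / n) (i - 2) n := by
  have shift (x : ℝ) : x - (((i + 1 : ℕ) : ℝ) - 2) = x - (i - 2) - 1 := by push_cast; ring
  have scale : (m : ℝ) / n * (m / n) * (σ ^ 2 / n) = σ ^ 2 / m * (m / n) * (m / n) * (m / n) := by
    field_simp
  simp only [preAvg_eq_sum_indicator lam n hm, covariance_const_mul_left,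
    covariance_const_mul_right, hmodel.cov_sum_mul_obs σ τ, shift, signalSum, noiseSum,
    mul_mul_mul_comm ((m : ℝ) / n) _ ((m : ℝ) / n), ← Finset.mul_sum]
  linear_combination (∑ k ∈ Finset.Ico 1 (n + 1),
    (∑ j ∈ Finset.Ico k (n + 1), (Icc 0 2).indicator lam (m / n * j - (i - 2))) *
      ∑ j ∈ Finset.Ico k (n + 1), (Icc 0 2).indicator lam (m / n * j - (i - 2) - 1)) * scale

lemma block_mesh_bounds {n m : ℕ} {D : ℝ} (hm : 0 < m) (hD : (m : ℝ) ^ 2 ≤ D * n) :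
    (0 : ℝ) < n ∧ (m / n : ℝ) ≤ D ∧ (m / n : ℝ) ^ 2 * n ≤ D := by
  have one_le : (1 : ℝ) ≤ m := mod_cast hm
  have n_pos : (0 : ℝ) < n := by
    by_contra! hn
    rw [hn.antisymm n.cast_nonneg, mul_zero] at hD
    nlinarith
  refine ⟨n_pos, (div_le_iff₀ n_pos).2 (by nlinarith), ?_⟩
  rwa [div_pow, div_mul_eq_mul_div, div_le_iff₀ (by positivity), sq (n : ℝ), ← mul_assoc,
    mul_le_mul_iff_left₀ n_pos]

lemma IsKernel.exists_forall_abs_signalSum_add_noiseSum_sub_le {g : ℝ → ℝ} (hg : IsKernel g)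
    (σ τ D : ℝ) :
    ∃ C > 0, ∀ {n m i : ℕ}, (m : ℝ) ^ 2 ≤ D * n → 2 ≤ i → i + 1 ≤ m →
      |σ ^ 2 / m * signalSum g (m / n) (i - 2) n + τ ^ 2 * (m / n) * noiseSum g (m / n) (i - 2) n
          - σ ^ 2 / m * (∫ u in (0 : ℝ)..1, bigLam g u * bigLam g (1 - u))
          + τ ^ 2 * (m / n) * ∫ u in (0 : ℝ)..1, g u * g (1 - u)| ≤ C / n := by
  obtain ⟨C, hC⟩ := hg.exists_forall_abs_signalSum_sub_integral_le D
  set V := totalVariation fun x ↦ g x * g (x - 1)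
  have hV : 0 ≤ V := totalVariation_nonneg
  refine ⟨max (σ ^ 2 * C + τ ^ 2 * (D * V)) 1, by positivity, fun {n m i} hD hi him ↦ ?_⟩
  have hi' : (2 : ℝ) ≤ i := mod_cast hi
  have him' : (i : ℝ) + 1 ≤ m := mod_cast him
  have m_pos : (0 : ℝ) < m := by linarith
  obtain ⟨n_pos, h_le, h_sq⟩ := block_mesh_bounds (by lia) hD
  have h_pos : (0 : ℝ) < m / n := by positivity
  have offset : 0 ≤ (i : ℝ) - 2 := by linarith
  have upper : 3 < (m / n : ℝ) * (n + 1 : ℕ) - (i - 2) := by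
    rw [Nat.cast_succ, mul_add_one, div_mul_cancel₀ _ n_pos.ne']
    linarith
  have signal := hC h_pos.le h_le h_sq offset upper
  have noise := hg.abs_noiseSum_add_integral_le h_pos.le offset
    ((by norm_num : (2 : ℝ) < 3).trans upper).le
  set S := signalSum g (m / n) (i - 2) n
  set N := noiseSum g (m / n) (i - 2) n
  calc _ = |σ ^ 2 / m * (S - ∫ u in (0 : ℝ)..1, bigLam g u * bigLam g (1 - u))
          + τ ^ 2 * (m / n) * (N + ∫ u in (0 : ℝ)..1, g u * g (1 - u))| := by ring_nf
    _ ≤ σ ^ 2 / m * (m / n * C) + τ ^ 2 * (m / n) * (m / n * V) := by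
        refine (abs_add_le _ _).trans ?_
        rw [abs_mul, abs_mul, abs_of_nonneg (by positivity : 0 ≤ σ ^ 2 / (m : ℝ)),
          abs_of_nonneg (by positivity : 0 ≤ τ ^ 2 * (m / n : ℝ))]
        gcongr
    _ = (σ ^ 2 * C + τ ^ 2 * ((m / n) ^ 2 * n * V)) / n := by field_simp
    _ ≤ max (σ ^ 2 * C + τ ^ 2 * (D * V)) 1 / n := by
        gcongr
        exact le_max_of_le_left (by gcongr)

end Covariance

section PreAverage

lemma boundedVariationOn_of_isPreAverageFn {lam : ℝ → ℝ} (hlam : IsPreAverageFn lam) :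
    BoundedVariationOn lam (Icc 0 2) := by
  obtain ⟨N, t, K, _, ht0, htN, ht, hlip⟩ := hlam.piecewise_lipschitz
  rw [← ht0, ← htN]
  exact boundedVariationOn_Icc_of_forall_lt (fun i hi ↦ (ht i hi).le)
    fun i hi ↦ boundedVariationOn_Icc_of_lipschitzOnWith_Ioo (hlip i hi)

lemma mOf_sq_le {c : ℝ} (hc : 0 < c) {n : ℕ} (hn : c ^ 2 ≤ n) :
    (mOf c n : ℝ) ^ 2 ≤ 4 * c ^ 2 * n := by
  have one_le : 1 ≤ √n / c := (one_le_div hc).2 (Real.le_sqrt_of_sq_le hn)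
  have floor_pos : (1 : ℝ) ≤ ⌊√n / c⌋₊ := mod_cast (Nat.one_le_floor_iff _).2 one_le
  have sqrt_le : √n ≤ 2 * c * ⌊√n / c⌋₊ := by
    have half_le : √n / c ≤ 2 * ⌊√n / c⌋₊ := by linarith [Nat.lt_floor_add_one (√n / c)]
    rw [div_le_iff₀ hc] at half_le
    linarith
  have mul_floor_le : (mOf c n : ℝ) * ⌊√n / c⌋₊ ≤ n := mod_cast Nat.div_mul_le_self n _
  have n_le : (n : ℝ) ≤ (2 * c * ⌊√n / c⌋₊) ^ 2 := (Real.sqrt_le_iff.1 sqrt_le).2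
  have n_pos : (0 : ℝ) < n := (by positivity : 0 < c ^ 2).trans_le hn
  refine le_of_mul_le_mul_right ?_ n_pos
  calc (mOf c n : ℝ) ^ 2 * n
      ≤ (mOf c n : ℝ) ^ 2 * (2 * c * ⌊√n / c⌋₊) ^ 2 := by gcongr
    _ = 4 * c ^ 2 * (mOf c n * ⌊√n / c⌋₊) ^ 2 := by ring
    _ ≤ 4 * c ^ 2 * n ^ 2 := by gcongr
    _ = 4 * c ^ 2 * n * n := by ring

end PreAverage

end PreAveraging

theorem preAveragedObs_adjacent_covariance_general (σ τ D : ℝ) {lam : ℝ → ℝ}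
    (hlam : BoundedVariationOn lam (Set.Icc 0 2))
    (hanti : ∀ t ∈ Set.Icc (0 : ℝ) 1, lam t = -lam (2 - t)) :
    ∃ C > 0, ∀ {Ω : Type*} [MeasurableSpace Ω] {μ : Measure Ω} [IsFiniteMeasure μ]
      {W η : ℕ → Ω → ℝ} {n m i : ℕ}, PreAveraging.IsSecondOrderModel μ n W η →
      (m : ℝ) ^ 2 ≤ D * n → 2 ≤ i → i + 1 ≤ m →
      |cov[preAvg lam n m (obs σ τ W η) i, preAvg lam n m (obs σ τ W η) (i + 1); μ]
          - σ ^ 2 / m * (∫ u in (0 : ℝ)..1, bigLam lam u * bigLam lam (1 - u))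
          + τ ^ 2 * (m / n) * ∫ u in (0 : ℝ)..1, lam u * lam (1 - u)| ≤ C / n := by
  obtain ⟨C, C_pos, hC⟩ := (PreAveraging.isKernel_indicator hlam
    hanti).exists_forall_abs_signalSum_add_noiseSum_sub_le σ τ D
  refine ⟨C, C_pos, fun hmodel hm hi him ↦ ?_⟩
  have bound := hC hm hi him
  rwa [← hmodel.cov_preAvg_succ σ τ lam (by lia), PreAveraging.integral_bigLam_indicator_mul,
    PreAveraging.integral_indicator_mul] at bound

theorem preAveragedObs_adjacent_covariance (σ τ c : ℝ) (hσ : 0 < σ) (hτ : 0 < τ) (hc : 0 < c)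
    (lam : ℝ → ℝ) (hlam : IsPreAverageFn lam)
    (Ω : ℕ → Type*) [∀ n, MeasureSpace (Ω n)] [∀ n, IsProbabilityMeasure (ℙ : Measure (Ω n))]
    (W η : (n : ℕ) → ℕ → Ω n → ℝ)
    (hmodel : ∀ n, IsSimplifiedModel n (W n) (η n)) :
    ∃ C > 0, ∃ N : ℕ, ∀ n ≥ N, ∀ i : ℕ, 2 ≤ i → i + 1 ≤ mOf c n →
      |((∫ ω, preAvg lam n (mOf c n) (obs σ τ (W n) (η n)) i ω *
              preAvg lam n (mOf c n) (obs σ τ (W n) (η n)) (i + 1) ω)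
          - (∫ ω, preAvg lam n (mOf c n) (obs σ τ (W n) (η n)) i ω) *
            (∫ ω, preAvg lam n (mOf c n) (obs σ τ (W n) (η n)) (i + 1) ω))
          - (σ ^ 2 / (mOf c n : ℝ)) * (∫ u in (0:ℝ)..1, bigLam lam u * bigLam lam (1 - u))
          + τ ^ 2 * ((mOf c n : ℝ) / n) * ∫ u in (0:ℝ)..1, lam u * lam (1 - u)| ≤ C / n := by
  obtain ⟨C, C_pos, hC⟩ := preAveragedObs_adjacent_covariance_general σ τ (4 * c ^ 2)
    (PreAveraging.boundedVariationOn_of_isPreAverageFn hlam) hlam.antisymm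
  refine ⟨C, C_pos, ⌈c ^ 2⌉₊, fun n hn i hi him ↦ ?_⟩
  have second_order := PreAveraging.isSecondOrderModel_of_isSimplifiedModel (hmodel n)
  have bound := hC second_order (PreAveraging.mOf_sq_le hc (Nat.ceil_le.1 hn)) hi him
  rwa [covariance_eq_sub (second_order.memLp_preAvg σ τ lam _ i)
    (second_order.memLp_preAvg σ τ lam _ (i + 1))] at bound
end

section
/- In the simplified model (Case III of the covariance computation), there are constants C > 0 and N such that for all n ≥ N and all 2 ≤ i ≤ m, |Var(Ȳ_{i,m}) − σ²/m − τ²(m/n)∫₀² λ(u)² du| ≤ C/n; that is, Var(Ȳ_{i,m}) = (σ²/m)∫₀² Λ(u)² du + τ²(m/n)∫₀² λ(u)² du + O(1/n) uniformly in i, with ∫₀² Λ(u)² du = 1. -/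
open MeasureTheory ProbabilityTheory Real

/-!
The value `W_{j/n}` is a sum of `j` uncorrelated increments of variance `1/n`, so the signal part
of a weighted sum of observations has variance `σ²/n` times the sum over `k < n` of the squared
tail sums `∑_{j > k} w_j`. With pre-averaging weights these tail sums are Riemann sums of mesh
`h = m/n` for `Λ`, because `∫ λ = 0`, and the outer sum is a Riemann sum for `Λ²`. For a function
of bounded variation every Riemann sum of mesh `h` is within `h` times the total variation of the
integral. Extending `λ` and `Λ` by zero off `[0,2]` keeps the variation finite, so the ends of a
block need no separate treatment, and the errors are `O(1/n)` because `h² = O(1/n)`.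
-/

open Set

section BoundedVariation

variable {α : Type*} [LinearOrder α]

lemma eVariationOn_add_le {E : Type*} [SeminormedAddCommGroup E] (f g : α → E) (s : Set α) :
    eVariationOn (f + g) s ≤ eVariationOn f s + eVariationOn g s := by
  refine iSup_le fun ⟨n, u, hu, hus⟩ => ?_
  calc ∑ i ∈ Finset.range n, edist ((f + g) (u (i + 1))) ((f + g) (u i))
      ≤ ∑ i ∈ Finset.range n, (edist (f (u (i + 1))) (f (u i)) + edist (g (u (i + 1))) (g (u i))) :=
        Finset.sum_le_sum fun i _ => edist_add_add_le _ _ _ _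
    _ ≤ eVariationOn f s + eVariationOn g s := by
        rw [Finset.sum_add_distrib]
        exact add_le_add (eVariationOn.sum_le hu hus) (eVariationOn.sum_le hu hus)

lemma boundedVariationOn_indicator_Icc_one (a b : α) (s : Set α) :
    BoundedVariationOn ((Icc a b).indicator (1 : α → ℝ)) s := by
  let φ : α → Fin 3 := fun x => if x < a then 0 else if x ≤ b then 1 else 2
  have hφ : Monotone φ := fun x y hxy => by simp only [φ]; grind
  have hfactor : (Icc a b).indicator (1 : α → ℝ) = (fun k => if k = 1 then 1 else 0) ∘ φ := by
    ext x
    simp only [indicator_apply, mem_Icc, Pi.one_apply, Function.comp_apply, φ]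
    grind
  rw [hfactor]
  exact ne_top_of_le_ne_top (BoundedVariationOn.of_finite _ univ)
    (eVariationOn.comp_le_of_monotoneOn _ φ (hφ.monotoneOn s) fun _ _ => mem_univ _)

lemma boundedVariationOn_update {f : α → ℝ} {s : Set α} (hf : BoundedVariationOn f s)
    (a : α) (y : ℝ) : BoundedVariationOn (Function.update f a y) s := by
  have hjump : BoundedVariationOn (fun x => (y - f a) * (Icc a a).indicator 1 x) s :=
    (lipschitzWith_smul (y - f a)).comp_boundedVariationOn
      (boundedVariationOn_indicator_Icc_one a a s)
  have hupdate : Function.update f a y = f + fun x => (y - f a) * (Icc a a).indicator 1 x := by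
    ext x
    by_cases hx : x = a <;> simp [hx]
  rw [hupdate]
  exact ne_top_of_le_ne_top (ENNReal.add_ne_top.2 ⟨hf, hjump⟩) (eVariationOn_add_le _ _ s)

lemma boundedVariationOn_indicator_Icc {f : α → ℝ} {a b : α}
    (hf : BoundedVariationOn f (Icc a b)) :
    BoundedVariationOn ((Icc a b).indicator f) univ := by
  rcases lt_or_ge b a with hab | hab
  · rw [Icc_eq_empty_of_lt hab, indicator_empty]
    refine ne_of_eq_of_ne (eVariationOn.constant_on ?_) ENNReal.zero_ne_top
    exact fun _ ⟨_, _, hx⟩ _ ⟨_, _, hy⟩ => hx.symm.trans hy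
  let clamp : α → α := fun x => projIcc a b hab x
  have hclamp : BoundedVariationOn (f ∘ clamp) univ :=
    ne_top_of_le_ne_top hf <| eVariationOn.comp_le_of_monotoneOn f clamp
      (fun _ _ _ _ hxy => monotone_projIcc hab hxy) fun x _ => (projIcc a b hab x).2
  have hproduct : (Icc a b).indicator f = fun x => (Icc a b).indicator 1 x * (f ∘ clamp) x := by
    ext x
    by_cases hx : x ∈ Icc a b
    · simp [hx, clamp, projIcc_of_mem hab hx]
    · simp [hx]
  rw [hproduct]
  exact (boundedVariationOn_indicator_Icc_one a b univ).mul hclamp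

lemma boundedVariationOn_Icc_trans {E : Type*} [PseudoEMetricSpace E] {f : α → E} {a b c : α}
    (hab : a ≤ b) (hbc : b ≤ c) (hf : BoundedVariationOn f (Icc a b))
    (hf' : BoundedVariationOn f (Icc b c)) : BoundedVariationOn f (Icc a c) := by
  rw [BoundedVariationOn, ← Icc_union_Icc_eq_Icc hab hbc,
    eVariationOn.union f (isGreatest_Icc hab) (isLeast_Icc hbc)]
  exact ENNReal.add_ne_top.2 ⟨hf, hf'⟩

lemma boundedVariationOn_Icc_of_forall_lt {E : Type*} [PseudoEMetricSpace E] {f : α → E}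
    {t : ℕ → α} {N : ℕ} (ht : ∀ i < N, t i ≤ t (i + 1))
    (hf : ∀ i < N, BoundedVariationOn f (Icc (t i) (t (i + 1)))) :
    BoundedVariationOn f (Icc (t 0) (t N)) := by
  suffices hinitial : ∀ k ≤ N, t 0 ≤ t k ∧ BoundedVariationOn f (Icc (t 0) (t k)) from
    (hinitial N le_rfl).2
  intro k hk
  induction k with
  | zero => exact ⟨le_rfl, BoundedVariationOn.of_subsingleton (by simp)⟩
  | succ k ih =>
    obtain ⟨hle, hbv⟩ := ih (Nat.le_of_succ_le hk)
    exact ⟨hle.trans (ht k hk), boundedVariationOn_Icc_trans hle (ht k hk) hbv (hf k hk)⟩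

end BoundedVariation

lemma boundedVariationOn_Icc_of_lipschitzOnWith_Ioo {f : ℝ → ℝ} {K : NNReal} {a b : ℝ}
    (hf : LipschitzOnWith K f (Ioo a b)) : BoundedVariationOn f (Icc a b) := by
  obtain ⟨g, hg, hfg⟩ := hf.extend_real
  have hgbv : BoundedVariationOn g (Icc a b) :=
    hg.comp_boundedVariationOn (BoundedVariationOn.id_Icc a b)
  refine ne_of_eq_of_ne (eVariationOn.congr fun x hx => ?_)
    (boundedVariationOn_update (boundedVariationOn_update hgbv a (f a)) b (f b))
  by_cases hxb : x = b
  · simp [hxb]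
  by_cases hxa : x = a
  · simp [← hxa, hxb]
  simpa [hxa, hxb] using hfg ⟨hx.1.lt_of_ne' hxa, hx.2.lt_of_ne hxb⟩

lemma intervalIntegrable_of_boundedVariationOn {f : ℝ → ℝ} {a b : ℝ}
    (hf : BoundedVariationOn f (uIcc a b)) : IntervalIntegrable f volume a b := by
  obtain ⟨p, q, hp, hq, rfl⟩ := hf.locallyBoundedVariationOn.exists_monotoneOn_sub_monotoneOn
  exact hp.intervalIntegrable.sub hq.intervalIntegrable

section RiemannSum

/-- The total variation on `ℝ` as a real number; it is `0` by convention when infinite. -/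
noncomputable def totalVariation (f : ℝ → ℝ) : ℝ := (eVariationOn f univ).toReal

lemma totalVariation_nonneg (f : ℝ → ℝ) : 0 ≤ totalVariation f := ENNReal.toReal_nonneg

lemma abs_mul_sub_integral_le {f : ℝ → ℝ} {a b y : ℝ} (hf : BoundedVariationOn f (Icc a b))
    (hy : y ∈ Icc a b) :
    |(b - a) * f y - ∫ x in a..b, f x| ≤ (b - a) * (eVariationOn f (Icc a b)).toReal := by
  have hab : a ≤ b := hy.1.trans hy.2
  have hint : IntervalIntegrable f volume a b :=
    intervalIntegrable_of_boundedVariationOn (by rwa [uIcc_of_le hab])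
  have hconst : (b - a) * f y = ∫ _ in a..b, f y := by simp
  rw [hconst, ← intervalIntegral.integral_sub (by simp) hint, ← Real.norm_eq_abs, mul_comm,
    ← abs_of_nonneg (sub_nonneg.2 hab)]
  refine intervalIntegral.norm_integral_le_of_norm_le_const fun x hx => ?_
  rw [uIoc_of_le hab] at hx
  exact hf.dist_le hy (Ioc_subset_Icc_self hx)

lemma abs_taggedSum_sub_integral_le {f : ℝ → ℝ} {u ξ : ℕ → ℝ} {δ : ℝ} {n : ℕ} (hu : Monotone u)
    (hmesh : ∀ j < n, u (j + 1) - u j ≤ δ) (hξ : ∀ j < n, ξ j ∈ Icc (u j) (u (j + 1)))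
    (hf : BoundedVariationOn f (Icc (u 0) (u n))) :
    |∑ j ∈ Finset.range n, (u (j + 1) - u j) * f (ξ j) - ∫ x in u 0..u n, f x|
      ≤ δ * (eVariationOn f (Icc (u 0) (u n))).toReal := by
  have hcell : ∀ j < n, BoundedVariationOn f (Icc (u j) (u (j + 1))) := fun j hj =>
    hf.mono (Icc_subset_Icc (hu j.zero_le) (hu hj))
  have hint : ∀ j < n, IntervalIntegrable f volume (u j) (u (j + 1)) := fun j hj =>
    intervalIntegrable_of_boundedVariationOn (by rw [uIcc_of_le (hu j.le_succ)]; exact hcell j hj)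
  rw [← intervalIntegral.sum_integral_adjacent_intervals hint, ← Finset.sum_sub_distrib,
    ← eVariationOn.sum' f hu, ENNReal.toReal_sum fun j hj => hcell j (Finset.mem_range.1 hj),
    Finset.mul_sum]
  refine (Finset.abs_sum_le_sum_abs _ _).trans (Finset.sum_le_sum fun j hj => ?_)
  rw [Finset.mem_range] at hj
  exact (abs_mul_sub_integral_le (hcell j hj) (hξ j hj)).trans
    (mul_le_mul_of_nonneg_right (hmesh j hj) ENNReal.toReal_nonneg)

lemma abs_riemannSum_sub_integral_le {f : ℝ → ℝ} (hf : BoundedVariationOn f univ) {h : ℝ}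
    (hh : 0 ≤ h) (x₀ : ℝ) {ξ : ℕ → ℝ} {n : ℕ}
    (hξ : ∀ j < n, ξ j ∈ Icc (x₀ + h * j) (x₀ + h * (j + 1))) :
    |h * ∑ j ∈ Finset.range n, f (ξ j) - ∫ x in x₀..x₀ + h * n, f x| ≤ h * totalVariation f := by
  have hgrid : Monotone fun j : ℕ => x₀ + h * j := fun i j hij => by dsimp only; gcongr
  have hstep : ∀ j : ℕ, x₀ + h * ((j + 1 : ℕ) : ℝ) - (x₀ + h * j) = h := fun j => by
    push_cast; ring
  have hsum := abs_taggedSum_sub_integral_le (f := f) hgrid (fun j _ => (hstep j).le)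
    (by simpa using hξ) (hf.mono (subset_univ _))
  simp only [hstep, ← Finset.mul_sum, Nat.cast_zero, mul_zero, add_zero] at hsum
  exact hsum.trans (mul_le_mul_of_nonneg_left
    (ENNReal.toReal_mono hf (eVariationOn.mono f (subset_univ _))) hh)

end RiemannSum

lemma abs_le_totalVariation {f : ℝ → ℝ} (hf : BoundedVariationOn f univ) {y : ℝ} (hy : f y = 0)
    (x : ℝ) : |f x| ≤ totalVariation f := by
  simpa [totalVariation, Real.dist_eq, hy] using hf.dist_le (mem_univ x) (mem_univ y)

lemma intervalIntegral_eq_of_support_subset_Icc {f : ℝ → ℝ} {a b p q : ℝ}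
    (hf : Function.support f ⊆ Icc p q) (hpq : p ≤ q) (hap : a ≤ p) (hqb : q ≤ b) :
    ∫ x in a..b, f x = ∫ x in p..q, f x := by
  rw [intervalIntegral.integral_of_le (hap.trans (hpq.trans hqb)),
    intervalIntegral.integral_of_le hpq, ← integral_Icc_eq_integral_Ioc,
    ← integral_Icc_eq_integral_Ioc]
  exact setIntegral_eq_of_subset_of_forall_sdiff_eq_zero measurableSet_Icc
    (Icc_subset_Icc hap hqb) fun x hx => Function.notMem_support.1 fun h => hx.2 (hf h)

lemma intervalIntegral_indicator_Icc {f : ℝ → ℝ} {a b u : ℝ} (hu : u ∈ Icc a b) :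
    ∫ x in a..u, (Icc a b).indicator f x = ∫ x in a..u, f x := by
  refine intervalIntegral.integral_congr fun x hx => ?_
  rw [uIcc_of_le hu.1] at hx
  exact indicator_of_mem (Icc_subset_Icc_right hu.2 hx) f

lemma abs_gridSum_sub_integral_le {f : ℝ → ℝ} (hf : BoundedVariationOn f univ) {p q h x₀ : ℝ}
    (hsupp : Function.support f ⊆ Icc p q) (hpq : p ≤ q) (hh : 0 ≤ h) {n : ℕ} (hx₀ : x₀ ≤ p)
    (hend : q ≤ x₀ + h * n) :
    |h * ∑ k ∈ Finset.range n, f (x₀ + h * k) - ∫ x in p..q, f x| ≤ h * totalVariation f := by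
  rw [← intervalIntegral_eq_of_support_subset_Icc hsupp hpq hx₀ hend]
  exact abs_riemannSum_sub_integral_le hf hh x₀ fun k _ => ⟨le_rfl, by linarith⟩

lemma abs_sum_sq_sub_sum_sq_le {ι : Type*} (s : Finset ι) {x y : ι → ℝ} {δ : ℝ}
    (hxy : ∀ k ∈ s, |x k - y k| ≤ δ) :
    |∑ k ∈ s, x k ^ 2 - ∑ k ∈ s, y k ^ 2| ≤ δ * (s.card * δ + 2 * ∑ k ∈ s, |y k|) := by
  have hterm : ∀ k ∈ s, |x k ^ 2 - y k ^ 2| ≤ δ * (δ + 2 * |y k|) := fun k hk => by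
    have hδ : 0 ≤ δ := (abs_nonneg _).trans (hxy k hk)
    calc |x k ^ 2 - y k ^ 2| = |x k - y k| * |(x k - y k) + 2 * y k| := by
          rw [← abs_mul]; ring_nf
      _ ≤ δ * (δ + 2 * |y k|) := by
          refine mul_le_mul (hxy k hk) ((abs_add_le _ _).trans ?_) (abs_nonneg _) hδ
          rw [abs_mul, abs_two]
          linarith [hxy k hk]
  rw [← Finset.sum_sub_distrib]
  calc |∑ k ∈ s, (x k ^ 2 - y k ^ 2)| ≤ ∑ k ∈ s, δ * (δ + 2 * |y k|) :=
        (Finset.abs_sum_le_sum_abs _ _).trans (Finset.sum_le_sum hterm)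
    _ = δ * (s.card * δ + 2 * ∑ k ∈ s, |y k|) := by
        rw [← Finset.mul_sum, Finset.sum_add_distrib, Finset.sum_const, nsmul_eq_mul,
          Finset.mul_sum]

lemma sum_sum_mul_mul_min {R : Type*} [CommSemiring R] (w : ℕ → R) (n : ℕ) :
    ∑ j ∈ Finset.range (n + 1), ∑ l ∈ Finset.range (n + 1), w j * w l * (min j l : ℕ)
      = ∑ k ∈ Finset.range n, (∑ j ∈ Finset.Ioc k n, w j) ^ 2 := by
  have htail : ∀ k, ∑ j ∈ Finset.Ioc k n, w j
      = ∑ j ∈ Finset.range (n + 1), if k < j then w j else 0 := fun k => by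
    rw [← Finset.sum_filter]
    congr 1
    grind
  have hmin : ∀ j ∈ Finset.range (n + 1), ∀ l, w j * w l * (min j l : ℕ)
      = ∑ k ∈ Finset.range n, (if k < j then w j else 0) * (if k < l then w l else 0) :=
    fun j hj l => by
      have hfilter : {k ∈ Finset.range n | k < j ∧ k < l} = Finset.range (min j l) := by grind
      simp only [ite_zero_mul_ite_zero, ← Finset.sum_filter, hfilter, Finset.sum_const,
        Finset.card_range, nsmul_eq_mul, mul_comm]
  calc ∑ j ∈ Finset.range (n + 1), ∑ l ∈ Finset.range (n + 1), w j * w l * (min j l : ℕ)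
      = ∑ j ∈ Finset.range (n + 1), ∑ l ∈ Finset.range (n + 1), ∑ k ∈ Finset.range n,
          (if k < j then w j else 0) * (if k < l then w l else 0) :=
        Finset.sum_congr rfl fun j hj => Finset.sum_congr rfl fun l _ => hmin j hj l
    _ = ∑ k ∈ Finset.range n, ∑ j ∈ Finset.range (n + 1), ∑ l ∈ Finset.range (n + 1),
          (if k < j then w j else 0) * (if k < l then w l else 0) := by
        rw [Finset.sum_comm_cycle]
    _ = ∑ k ∈ Finset.range n, (∑ j ∈ Finset.Ioc k n, w j) ^ 2 := by
        simp only [htail, sq, Finset.sum_mul_sum]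

section BigLam

variable {f : ℝ → ℝ}

lemma bigLam_sub_bigLam (hf : ∀ a b, IntervalIntegrable f volume a b) (x y : ℝ) :
    bigLam f x - bigLam f y = ∫ v in x..y, f v := by
  rw [← intervalIntegral.integral_interval_sub_left (hf 0 y) (hf 0 x), bigLam, bigLam]
  ring

lemma lipschitzWith_bigLam {K : NNReal} (hf : ∀ a b, IntervalIntegrable f volume a b)
    (hK : ∀ x, |f x| ≤ K) : LipschitzWith K (bigLam f) := by
  refine LipschitzWith.of_dist_le_mul fun x y => ?_
  rw [Real.dist_eq, bigLam_sub_bigLam hf, dist_comm, Real.dist_eq]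
  exact intervalIntegral.norm_integral_le_of_norm_le_const (f := f) fun v _ => hK v

lemma bigLam_eq_zero_of_two_le (hsupp : Function.support f ⊆ Icc 0 2)
    (hmean : ∫ x in (0 : ℝ)..2, f x = 0) {x : ℝ} (hx : 2 ≤ x) : bigLam f x = 0 := by
  rw [bigLam, intervalIntegral_eq_of_support_subset_Icc hsupp zero_le_two le_rfl hx, hmean,
    neg_zero]

lemma support_bigLam_subset (hf : ∀ a b, IntervalIntegrable f volume a b)
    (hsupp : Function.support f ⊆ Icc 0 2) (hmean : ∫ x in (0 : ℝ)..2, f x = 0) :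
    Function.support (bigLam f) ⊆ Icc 0 2 := by
  refine Function.support_subset_iff'.2 fun x hx => ?_
  rcases lt_or_ge x 0 with hx0 | hx0
  · rw [← sub_zero (bigLam f x), ← bigLam_eq_zero_of_two_le hsupp hmean le_rfl,
      bigLam_sub_bigLam hf,
      intervalIntegral_eq_of_support_subset_Icc hsupp zero_le_two hx0.le le_rfl, hmean,
      bigLam_eq_zero_of_two_le hsupp hmean le_rfl]
  · exact bigLam_eq_zero_of_two_le hsupp hmean (le_of_not_ge fun h => hx ⟨hx0, h⟩)

variable (hf : BoundedVariationOn f univ) (hsupp : Function.support f ⊆ Icc 0 2)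
  (hmean : ∫ x in (0 : ℝ)..2, f x = 0)

include hf in
lemma intervalIntegrable_of_boundedVariationOn_univ (a b : ℝ) : IntervalIntegrable f volume a b :=
  intervalIntegrable_of_boundedVariationOn (hf.mono (subset_univ _))

include hf hsupp hmean

lemma boundedVariationOn_bigLam : BoundedVariationOn (bigLam f) univ := by
  have hf3 : f 3 = 0 := Function.notMem_support.1 fun h => by linarith [(hsupp h).2]
  have hlip : LipschitzWith (totalVariation f).toNNReal (bigLam f) :=
    lipschitzWith_bigLam (intervalIntegrable_of_boundedVariationOn_univ hf) fun x => by
      rw [Real.coe_toNNReal _ (totalVariation_nonneg f)]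
      exact abs_le_totalVariation hf hf3 x
  rw [← indicator_eq_self.2
    (support_bigLam_subset (intervalIntegrable_of_boundedVariationOn_univ hf) hsupp hmean)]
  exact boundedVariationOn_indicator_Icc
    (hlip.comp_boundedVariationOn (BoundedVariationOn.id_Icc 0 2))

lemma abs_tailSum_sub_bigLam_le {h x₀ : ℝ} (hh : 0 ≤ h) {k n : ℕ} (hkn : k ≤ n)
    (hend : 2 ≤ x₀ + h * n) :
    |∑ j ∈ Finset.Ioc k n, h * f (x₀ + h * j) - bigLam f (x₀ + h * k)|
      ≤ h * totalVariation f := by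
  have hlast : x₀ + h * k + h * (n - k : ℕ) = x₀ + h * n := by rw [Nat.cast_sub hkn]; ring
  have hriemann := abs_riemannSum_sub_integral_le hf hh (x₀ + h * k)
    (ξ := fun j => x₀ + h * (k + 1 + j : ℕ)) (n := n - k)
    fun j _ => by push_cast; constructor <;> linarith
  rw [hlast, ← bigLam_sub_bigLam (intervalIntegrable_of_boundedVariationOn_univ hf),
    bigLam_eq_zero_of_two_le hsupp hmean hend, sub_zero] at hriemann
  rwa [← Finset.Ico_add_one_add_one_eq_Ioc, Finset.sum_Ico_eq_sum_range, Nat.add_sub_add_right,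
    ← Finset.mul_sum]

lemma abs_sum_sq_tailSum_sub_integral_le {h x₀ : ℝ} (hh : 0 ≤ h) {n : ℕ} (hx₀ : x₀ ≤ 0)
    (hend : 2 ≤ x₀ + h * n) :
    |h * ∑ k ∈ Finset.range n, (∑ j ∈ Finset.Ioc k n, h * f (x₀ + h * j)) ^ 2
        - ∫ u in (0 : ℝ)..2, bigLam f u ^ 2|
      ≤ h * (n * h ^ 2 * totalVariation f ^ 2
        + 2 * totalVariation f
          * ((∫ u in (0 : ℝ)..2, |bigLam f u|) + h * totalVariation fun u => |bigLam f u|)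
        + totalVariation fun u => bigLam f u ^ 2) := by
  have hsuppΛ := support_bigLam_subset (intervalIntegrable_of_boundedVariationOn_univ hf)
    hsupp hmean
  have hΛ := boundedVariationOn_bigLam hf hsupp hmean
  have habs := abs_gridSum_sub_integral_le (lipschitzWith_one_norm.comp_boundedVariationOn hΛ)
    ((Function.support_comp_subset norm_zero _).trans hsuppΛ) zero_le_two hh hx₀ hend
  have hsq := abs_gridSum_sub_integral_le (f := fun u => bigLam f u ^ 2)
    (by simp only [sq]; exact hΛ.mul hΛ) (by simpa using hsuppΛ) zero_le_two hh hx₀ hend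
  have hreplace := abs_sum_sq_sub_sum_sq_le (Finset.range n) fun k hk =>
    abs_tailSum_sub_bigLam_le hf hsupp hmean hh (Finset.mem_range.1 hk).le hend
  rw [Finset.card_range] at hreplace
  simp only [Function.comp_apply, Real.norm_eq_abs] at habs
  set V := totalVariation f
  set T : ℕ → ℝ := fun k => ∑ j ∈ Finset.Ioc k n, h * f (x₀ + h * j)
  set y : ℕ → ℝ := fun k => bigLam f (x₀ + h * k)
  set J := ∫ u in (0 : ℝ)..2, bigLam f u ^ 2
  have hsumabs := sub_le_iff_le_add'.1 (abs_le.1 habs).2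
  calc |h * ∑ k ∈ Finset.range n, T k ^ 2 - J|
      = |h * (∑ k ∈ Finset.range n, T k ^ 2 - ∑ k ∈ Finset.range n, y k ^ 2)
          + (h * ∑ k ∈ Finset.range n, y k ^ 2 - J)| := by ring_nf
    _ ≤ h * (h * V * (n * (h * V) + 2 * ∑ k ∈ Finset.range n, |y k|))
          + h * totalVariation fun u => bigLam f u ^ 2 := by
        refine (abs_add_le _ _).trans (add_le_add ?_ hsq)
        rw [abs_mul, abs_of_nonneg hh]
        exact mul_le_mul_of_nonneg_left hreplace hh
    _ = h * (n * h ^ 2 * V ^ 2 + 2 * V * (h * ∑ k ∈ Finset.range n, |y k|)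
          + totalVariation fun u => bigLam f u ^ 2) := by ring
    _ ≤ _ := by
        have hV : 0 ≤ V := totalVariation_nonneg f
        gcongr
        exact hsumabs

omit hmean in
lemma abs_sum_sq_sub_integral_le {h x₀ : ℝ} (hh : 0 ≤ h) {n : ℕ} (hx₀ : x₀ ≤ 0)
    (hend : 2 ≤ x₀ + h * n) :
    |∑ j ∈ Finset.range (n + 1), (h * f (x₀ + h * j)) ^ 2 - h * ∫ u in (0 : ℝ)..2, f u ^ 2|
      ≤ h ^ 2 * totalVariation fun u => f u ^ 2 := by
  have hgrid := abs_gridSum_sub_integral_le (f := fun u => f u ^ 2) (n := n + 1)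
    (by simp only [sq]; exact hf.mul hf) (by simpa using hsupp) zero_le_two hh hx₀
    (by push_cast; linarith)
  simp only [mul_pow, ← Finset.mul_sum]
  rw [sq, mul_assoc, mul_assoc, ← mul_sub, abs_mul, abs_of_nonneg hh]
  exact mul_le_mul_of_nonneg_left hgrid hh

end BigLam

/-- The covariance structure of the simplified model, without Gaussianity: the grid values
`W j` and noises `η j`, `j ≤ n`, are square integrable, the `W j` have the covariances of
`W_{j/n}` for a standard Brownian motion, and the `η j` are white noise uncorrelated with them. -/
structure IsSecondOrderModel {Ω : Type*} [MeasurableSpace Ω] (P : Measure Ω) (n : ℕ)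
    (W η : ℕ → Ω → ℝ) : Prop where
  memLp_left : ∀ j ≤ n, MemLp (W j) 2 P
  memLp_right : ∀ j ≤ n, MemLp (η j) 2 P
  cov_left : ∀ j ≤ n, ∀ l ≤ n, cov[W j, W l; P] = (min j l : ℕ) / (n : ℝ)
  cov_right : ∀ j ≤ n, ∀ l ≤ n, cov[η j, η l; P] = if j = l then 1 else 0
  cov_left_right : ∀ j ≤ n, ∀ l ≤ n, cov[W j, η l; P] = 0

lemma covariance_of_hasLaw_gaussianReal {Ω : Type*} [MeasurableSpace Ω] {P : Measure Ω}
    {X Y : Ω → ℝ} {v w : NNReal} (hX : HasLaw X (gaussianReal 0 v) P)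
    (hY : HasLaw Y (gaussianReal 0 w) P) : cov[X, Y; P] = ∫ ω, X ω * Y ω ∂P := by
  simp [covariance, hX.integral_eq, hY.integral_eq]

namespace IsSimplifiedModel

variable {Ω : Type*} [MeasureSpace Ω] {n : ℕ} {W η : ℕ → Ω → ℝ}

lemma exists_hasLaw_gaussianReal (hmodel : IsSimplifiedModel n W η) {j : ℕ} (hj : j ≤ n)
    (s t : ℝ) : ∃ v, HasLaw (fun ω => s * W j ω + t * η j ω) (gaussianReal 0 v) := by
  obtain ⟨hW, hη, hgauss, -⟩ := hmodel
  obtain ⟨v, hv⟩ := hgauss (Pi.single j s) (Pi.single j t)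
  refine ⟨v, by fun_prop, ?_⟩
  rw [← hv]
  congr 1
  ext ω
  rw [Finset.sum_eq_single_of_mem j (by grind) fun l _ hl => by simp [hl]]
  simp

lemma isSecondOrderModel [IsProbabilityMeasure (ℙ : Measure Ω)]
    (hmodel : IsSimplifiedModel n W η) : IsSecondOrderModel ℙ n W η := by
  have hW : ∀ j ≤ n, ∃ v, HasLaw (W j) (gaussianReal 0 v) := fun j hj => by
    simpa using hmodel.exists_hasLaw_gaussianReal hj 1 0
  have hη : ∀ j ≤ n, ∃ v, HasLaw (η j) (gaussianReal 0 v) := fun j hj => by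
    simpa using hmodel.exists_hasLaw_gaussianReal hj 0 1
  obtain ⟨-, -, -, hWW, hηη, hWη⟩ := hmodel
  refine ⟨fun j hj => (hW j hj).elim fun _ hlaw => hlaw.hasGaussianLaw.memLp_two,
    fun j hj => (hη j hj).elim fun _ hlaw => hlaw.hasGaussianLaw.memLp_two, fun j hj l hl => ?_,
    fun j hj l hl => ?_, fun j hj l hl => ?_⟩
  · obtain ⟨⟨_, hX⟩, ⟨_, hY⟩⟩ := And.intro (hW j hj) (hW l hl)
    rw [covariance_of_hasLaw_gaussianReal hX hY, hWW j l hj hl, Nat.cast_min]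
  · obtain ⟨⟨_, hX⟩, ⟨_, hY⟩⟩ := And.intro (hη j hj) (hη l hl)
    rw [covariance_of_hasLaw_gaussianReal hX hY, hηη j l hj hl]
  · obtain ⟨⟨_, hX⟩, ⟨_, hY⟩⟩ := And.intro (hW j hj) (hη l hl)
    rw [covariance_of_hasLaw_gaussianReal hX hY, hWη j l hj hl]

end IsSimplifiedModel

namespace IsSecondOrderModel

variable {Ω : Type*} [MeasurableSpace Ω] {P : Measure Ω} {n : ℕ} {W η : ℕ → Ω → ℝ} {j l : ℕ}

lemma memLp_obs (hmodel : IsSecondOrderModel P n W η) (σ τ : ℝ) (hj : j ≤ n) :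
    MemLp (obs σ τ W η j) 2 P :=
  ((hmodel.memLp_left j hj).const_mul σ).add ((hmodel.memLp_right j hj).const_mul τ)

variable [IsFiniteMeasure P]

lemma covariance_obs (hmodel : IsSecondOrderModel P n W η) (σ τ : ℝ) (hj : j ≤ n) (hl : l ≤ n) :
    cov[obs σ τ W η j, obs σ τ W η l; P]
      = σ ^ 2 / n * (min j l : ℕ) + τ ^ 2 * if j = l then 1 else 0 := by
  have hσW : ∀ k ≤ n, MemLp (fun ω => σ * W k ω) 2 P := fun k hk =>
    (hmodel.memLp_left k hk).const_mul σ
  have hτη : ∀ k ≤ n, MemLp (fun ω => τ * η k ω) 2 P := fun k hk =>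
    (hmodel.memLp_right k hk).const_mul τ
  have hobs : ∀ k, obs σ τ W η k = (fun ω => σ * W k ω) + fun ω => τ * η k ω := fun _ => rfl
  rw [hobs, hobs, covariance_add_left (hσW j hj) (hτη j hj) ((hσW l hl).add (hτη l hl)),
    covariance_add_right (hσW j hj) (hσW l hl) (hτη l hl),
    covariance_add_right (hτη j hj) (hσW l hl) (hτη l hl)]
  simp only [covariance_const_mul_left, covariance_const_mul_right, hmodel.cov_left j hj l hl,
    hmodel.cov_right j hj l hl, hmodel.cov_left_right j hj l hl, covariance_comm (η j) (W l),
    hmodel.cov_left_right l hl j hj]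
  ring

lemma variance_sum_mul_obs (hmodel : IsSecondOrderModel P n W η) (σ τ : ℝ) (w : ℕ → ℝ) :
    Var[fun ω => ∑ j ∈ Finset.range (n + 1), w j * obs σ τ W η j ω; P]
      = σ ^ 2 / n * ∑ k ∈ Finset.range n, (∑ j ∈ Finset.Ioc k n, w j) ^ 2
        + τ ^ 2 * ∑ j ∈ Finset.range (n + 1), w j ^ 2 := by
  have hcov : ∀ j ∈ Finset.range (n + 1), ∀ l ∈ Finset.range (n + 1),
      cov[fun ω => w j * obs σ τ W η j ω, fun ω => w l * obs σ τ W η l ω; P]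
        = σ ^ 2 / n * (w j * w l * (min j l : ℕ)) + τ ^ 2 * if j = l then w j * w l else 0 :=
    fun j hj l hl => by
      rw [covariance_const_mul_left, covariance_const_mul_right,
        hmodel.covariance_obs σ τ (by grind) (by grind)]
      split_ifs <;> ring
  rw [variance_fun_sum' fun j hj => (hmodel.memLp_obs σ τ (by grind)).const_mul (w j),
    Finset.sum_congr rfl fun j hj => Finset.sum_congr rfl (hcov j hj), ← sum_sum_mul_mul_min]
  simp only [Finset.sum_add_distrib, ← Finset.mul_sum, Finset.sum_ite_eq]
  simp +contextual [sq]

end IsSecondOrderModel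

lemma mem_blockIdx {n m i j : ℕ} (hm : 0 < m) :
    j ∈ blockIdx n m i ↔ j ∈ Finset.range (n + 1) ∧ (2 - i + m / n * j : ℝ) ∈ Icc 0 2 := by
  have hm' : (0 : ℝ) < m := Nat.cast_pos.2 hm
  have hcomm : (m : ℝ) / n * j = j / n * m := by ring
  rw [blockIdx, Finset.mem_filter, div_le_iff₀ hm', le_div_iff₀ hm', hcomm, mem_Icc]
  grind

lemma preAvg_apply {Ω : Type*} (f : ℝ → ℝ) (n m : ℕ) (A : ℕ → Ω → ℝ) (i : ℕ) (ω : Ω) :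
    preAvg f n m A i ω = m / n * ∑ j ∈ blockIdx n m i, f (2 - i + m / n * j) * A j ω := by
  have hpoint : ∀ j : ℕ, (m : ℝ) * j / n - (i - 2) = 2 - i + m / n * j := fun j => by ring
  simp only [preAvg, hpoint]

lemma preAvg_eq_sum_range {Ω : Type*} {f : ℝ → ℝ} (hsupp : Function.support f ⊆ Icc 0 2)
    {n m : ℕ} (hm : 0 < m) (A : ℕ → Ω → ℝ) (i : ℕ) :
    preAvg f n m A i
      = fun ω => ∑ j ∈ Finset.range (n + 1), m / n * f (2 - i + m / n * j) * A j ω := by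
  ext ω
  simp only [preAvg_apply, Finset.mul_sum, mul_assoc]
  refine Finset.sum_subset (Finset.filter_subset _ _) fun j hj hjblock => ?_
  have hzero : f (2 - i + m / n * j) = 0 := Function.notMem_support.1 fun h =>
    hjblock ((mem_blockIdx hm).2 ⟨hj, hsupp h⟩)
  rw [hzero, zero_mul, mul_zero]

lemma preAvg_indicator {Ω : Type*} (lam : ℝ → ℝ) {n m : ℕ} (hm : 0 < m) (A : ℕ → Ω → ℝ)
    (i : ℕ) : preAvg ((Icc 0 2).indicator lam) n m A i = preAvg lam n m A i := by
  ext ω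
  rw [preAvg_apply, preAvg_apply]
  congr 1
  refine Finset.sum_congr rfl fun j hj => ?_
  rw [indicator_of_mem ((mem_blockIdx hm).1 hj).2]

lemma sq_mOf_le {c : ℝ} (hc : 0 < c) (n : ℕ) : (mOf c n : ℝ) ^ 2 ≤ 4 * c ^ 2 * n := by
  set k := ⌊√n / c⌋₊ with hk
  rcases Nat.eq_zero_or_pos k with hk0 | hk0
  · rw [mOf, ← hk, hk0, Nat.div_zero, Nat.cast_zero, zero_pow two_ne_zero]
    positivity
  have hsq : √n ^ 2 = n := Real.sq_sqrt n.cast_nonneg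
  have hsqrt : √n ≤ 2 * c * k := by
    have hfloor : √n / c < k + 1 := Nat.lt_floor_add_one _
    rw [div_lt_iff₀ hc] at hfloor
    nlinarith [Nat.one_le_cast (α := ℝ).2 hk0]
  have hquot : (mOf c n : ℝ) * k ≤ n := by exact_mod_cast Nat.div_mul_le_self n k
  have hk0' : (0 : ℝ) < k := Nat.cast_pos.2 hk0
  refine le_of_mul_le_mul_right ?_ (pow_pos hk0' 2)
  calc (mOf c n : ℝ) ^ 2 * k ^ 2 = (mOf c n * k) ^ 2 := by ring
    _ ≤ n * √n ^ 2 := by rw [hsq, ← sq]; gcongr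
    _ ≤ n * (2 * c * k) ^ 2 := by gcongr
    _ = 4 * c ^ 2 * n * k ^ 2 := by ring

lemma abs_variance_preAvg_sub_le {f : ℝ → ℝ} (hf : BoundedVariationOn f univ)
    (hsupp : Function.support f ⊆ Icc 0 2) (hmean : ∫ u in (0 : ℝ)..2, f u = 0) {Ω : Type*}
    [MeasurableSpace Ω] {P : Measure Ω} [IsFiniteMeasure P] {n : ℕ} {W η : ℕ → Ω → ℝ}
    (hmodel : IsSecondOrderModel P n W η) (σ τ : ℝ) {m i : ℕ} (hn : 0 < n) (hi : 2 ≤ i)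
    (him : i ≤ m) :
    |Var[preAvg f n m (obs σ τ W η) i; P] - σ ^ 2 / m * (∫ u in (0 : ℝ)..2, bigLam f u ^ 2)
        - τ ^ 2 * (m / n) * ∫ u in (0 : ℝ)..2, f u ^ 2|
      ≤ (σ ^ 2 * (n * (m / n : ℝ) ^ 2 * totalVariation f ^ 2 + 2 * totalVariation f
            * ((∫ u in (0 : ℝ)..2, |bigLam f u|) + m / n * totalVariation fun u => |bigLam f u|)
            + totalVariation fun u => bigLam f u ^ 2)
          + τ ^ 2 * (n * (m / n : ℝ) ^ 2 * totalVariation fun u => f u ^ 2)) / n := by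
  have hm' : (0 : ℝ) < m := Nat.cast_pos.2 (by lia)
  have hn' : (0 : ℝ) < n := Nat.cast_pos.2 hn
  have hstep : (0 : ℝ) ≤ m / n := by positivity
  have hstart : (2 - i : ℝ) ≤ 0 := sub_nonpos.2 (Nat.ofNat_le_cast.2 hi)
  have hend : (2 : ℝ) ≤ 2 - i + m / n * n := by
    rw [div_mul_cancel₀ _ hn'.ne']
    linarith [(Nat.cast_le (α := ℝ)).2 him]
  have hsignal := abs_sum_sq_tailSum_sub_integral_le hf hsupp hmean hstep hstart hend
  have hnoise := abs_sum_sq_sub_integral_le hf hsupp hstep hstart hend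
  have hscale : (m / n : ℝ) / m = 1 / n := by field_simp
  have hcancel : (n : ℝ) / n = 1 := div_self hn'.ne'
  rw [preAvg_eq_sum_range hsupp (by lia), hmodel.variance_sum_mul_obs]
  set h : ℝ := m / n
  set S := ∑ k ∈ Finset.range n, (∑ j ∈ Finset.Ioc k n, h * f (2 - i + h * j)) ^ 2
  set N := ∑ j ∈ Finset.range (n + 1), (h * f (2 - i + h * j)) ^ 2
  set J := ∫ u in (0 : ℝ)..2, bigLam f u ^ 2
  set F := totalVariation fun u => f u ^ 2
  set X := n * h ^ 2 * totalVariation f ^ 2 + 2 * totalVariation f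
      * ((∫ u in (0 : ℝ)..2, |bigLam f u|) + h * totalVariation fun u => |bigLam f u|)
    + totalVariation fun u => bigLam f u ^ 2
  calc |σ ^ 2 / n * S + τ ^ 2 * N - σ ^ 2 / m * J - τ ^ 2 * h * ∫ u in (0 : ℝ)..2, f u ^ 2|
      = |σ ^ 2 / m * (h * S - J) + τ ^ 2 * (N - h * ∫ u in (0 : ℝ)..2, f u ^ 2)| := by
        congr 1
        linear_combination (-(σ ^ 2 * S)) * hscale
    _ ≤ σ ^ 2 / m * |h * S - J| + τ ^ 2 * |N - h * ∫ u in (0 : ℝ)..2, f u ^ 2| := by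
        refine (abs_add_le _ _).trans_eq ?_
        rw [abs_mul, abs_mul, abs_of_nonneg (by positivity : 0 ≤ σ ^ 2 / m),
          abs_of_nonneg (sq_nonneg τ)]
    _ ≤ σ ^ 2 / m * (h * X) + τ ^ 2 * (h ^ 2 * F) := by gcongr
    _ = (σ ^ 2 * X + τ ^ 2 * (n * h ^ 2 * F)) / n := by
        linear_combination (σ ^ 2 * X) * hscale - (τ ^ 2 * h ^ 2 * F) * hcancel

lemma exists_abs_variance_preAvg_sub_le {f : ℝ → ℝ} (hf : BoundedVariationOn f univ)
    (hsupp : Function.support f ⊆ Icc 0 2) (hmean : ∫ u in (0 : ℝ)..2, f u = 0) (σ τ : ℝ) {c : ℝ}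
    (hc : 0 < c) {Ω : ℕ → Type*} [∀ n, MeasurableSpace (Ω n)] {P : (n : ℕ) → Measure (Ω n)}
    [∀ n, IsFiniteMeasure (P n)] {W η : (n : ℕ) → ℕ → Ω n → ℝ}
    (hmodel : ∀ n, IsSecondOrderModel (P n) n (W n) (η n)) :
    ∃ C > 0, ∀ n i : ℕ, 2 ≤ i → i ≤ mOf c n →
      |Var[preAvg f n (mOf c n) (obs σ τ (W n) (η n)) i; P n]
          - σ ^ 2 / mOf c n * (∫ u in (0 : ℝ)..2, bigLam f u ^ 2)
          - τ ^ 2 * (mOf c n / n) * ∫ u in (0 : ℝ)..2, f u ^ 2| ≤ C / n := by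
  have hV : 0 ≤ totalVariation f := totalVariation_nonneg _
  have hA : 0 ≤ totalVariation fun u => |bigLam f u| := totalVariation_nonneg _
  have hB : 0 ≤ totalVariation fun u => bigLam f u ^ 2 := totalVariation_nonneg _
  have hF : 0 ≤ totalVariation fun u => f u ^ 2 := totalVariation_nonneg _
  have hI : 0 ≤ ∫ u in (0 : ℝ)..2, |bigLam f u| :=
    intervalIntegral.integral_nonneg zero_le_two fun _ _ => abs_nonneg _
  refine ⟨σ ^ 2 * (4 * c ^ 2 * totalVariation f ^ 2 + 2 * totalVariation f
      * ((∫ u in (0 : ℝ)..2, |bigLam f u|) + totalVariation fun u => |bigLam f u|)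
      + totalVariation fun u => bigLam f u ^ 2)
    + τ ^ 2 * (4 * c ^ 2 * totalVariation fun u => f u ^ 2) + 1, by positivity,
    fun n i hi him => ?_⟩
  have hmn : mOf c n ≤ n := Nat.div_le_self _ _
  have hn : 0 < n := by lia
  have hn' : (0 : ℝ) < n := Nat.cast_pos.2 hn
  have hstep : (mOf c n : ℝ) / n ≤ 1 := (div_le_one hn').2 (Nat.cast_le.2 hmn)
  have hmesh : n * (mOf c n / n : ℝ) ^ 2 ≤ 4 * c ^ 2 := by
    rw [div_pow, mul_div_assoc', div_le_iff₀ (pow_pos hn' 2)]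
    nlinarith [sq_mOf_le hc n]
  refine (abs_variance_preAvg_sub_le hf hsupp hmean (hmodel n) σ τ hn hi him).trans ?_
  refine div_le_div_of_nonneg_right (le_add_of_le_of_nonneg ?_ zero_le_one) hn'.le
  gcongr
  exact mul_le_of_le_one_left hA hstep

theorem preAveragedObs_variance_general (σ τ : ℝ) {c : ℝ} (hc : 0 < c) {lam : ℝ → ℝ}
    (hlam : BoundedVariationOn lam (Icc 0 2)) (hmean : ∫ u in (0 : ℝ)..2, lam u = 0)
    {Ω : ℕ → Type*} [∀ n, MeasurableSpace (Ω n)] {P : (n : ℕ) → Measure (Ω n)}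
    [∀ n, IsFiniteMeasure (P n)] {W η : (n : ℕ) → ℕ → Ω n → ℝ}
    (hmodel : ∀ n, IsSecondOrderModel (P n) n (W n) (η n)) :
    ∃ C > 0, ∀ n i : ℕ, 2 ≤ i → i ≤ mOf c n →
      |Var[preAvg lam n (mOf c n) (obs σ τ (W n) (η n)) i; P n]
          - σ ^ 2 / mOf c n * (∫ u in (0 : ℝ)..2, bigLam lam u ^ 2)
          - τ ^ 2 * (mOf c n / n) * ∫ u in (0 : ℝ)..2, lam u ^ 2| ≤ C / n := by
  have hbigLam : ∫ u in (0 : ℝ)..2, bigLam ((Icc 0 2).indicator lam) u ^ 2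
      = ∫ u in (0 : ℝ)..2, bigLam lam u ^ 2 :=
    intervalIntegral.integral_congr fun u hu => by
      rw [uIcc_of_le zero_le_two] at hu
      simp only [bigLam, intervalIntegral_indicator_Icc hu]
  have hsq : ∫ u in (0 : ℝ)..2, (Icc 0 2).indicator lam u ^ 2 = ∫ u in (0 : ℝ)..2, lam u ^ 2 :=
    intervalIntegral.integral_congr fun u hu => by
      rw [uIcc_of_le zero_le_two] at hu
      simp only [indicator_of_mem hu]
  obtain ⟨C, hC, hbound⟩ := exists_abs_variance_preAvg_sub_le
    (boundedVariationOn_indicator_Icc hlam) support_indicator_subset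
    ((intervalIntegral_indicator_Icc (right_mem_Icc.2 zero_le_two)).trans hmean) σ τ hc hmodel
  refine ⟨C, hC, fun n i hi him => ?_⟩
  have hm : 0 < mOf c n := by lia
  simpa only [hbigLam, hsq, preAvg_indicator lam hm] using hbound n i hi him

namespace IsPreAverageFn

variable {lam : ℝ → ℝ} (hlam : IsPreAverageFn lam)

include hlam

lemma boundedVariationOn : BoundedVariationOn lam (Icc 0 2) := by
  obtain ⟨N, t, K, -, ht0, htN, hlt, hlip⟩ := hlam.piecewise_lipschitz
  rw [← ht0, ← htN]
  exact boundedVariationOn_Icc_of_forall_lt (fun i hi => (hlt i hi).le) fun i hi =>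
    boundedVariationOn_Icc_of_lipschitzOnWith_Ioo (hlip i hi)

lemma intervalIntegrable {a b : ℝ} (ha : a ∈ Icc (0 : ℝ) 2) (hb : b ∈ Icc (0 : ℝ) 2) :
    IntervalIntegrable lam volume a b :=
  intervalIntegrable_of_boundedVariationOn (hlam.boundedVariationOn.mono (uIcc_subset_Icc ha hb))

lemma integral_symm_eq_zero {u : ℝ} (hu : u ∈ Icc (0 : ℝ) 1) : ∫ x in u..(2 - u), lam x = 0 := by
  have hanti : ∀ x ∈ Icc (0 : ℝ) 2, lam x = -lam (2 - x) := fun x hx => by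
    rcases le_total x 1 with hx1 | hx1
    · exact hlam.antisymm x ⟨hx.1, hx1⟩
    · rw [hlam.antisymm (2 - x) ⟨by linarith [hx.2], by linarith⟩, sub_sub_cancel, neg_neg]
  have hneg : ∫ x in u..(2 - u), lam x = -∫ x in u..(2 - u), lam x := by
    calc ∫ x in u..(2 - u), lam x = ∫ x in u..(2 - u), -lam (2 - x) := by
          refine intervalIntegral.integral_congr fun x hx => hanti x ?_
          rw [uIcc_of_le (by linarith [hu.2])] at hx
          exact ⟨hu.1.trans hx.1, hx.2.trans (by linarith [hu.1])⟩
      _ = -∫ x in u..(2 - u), lam x := by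
          rw [intervalIntegral.integral_neg, intervalIntegral.integral_comp_sub_left,
            sub_sub_cancel]
  linarith

lemma integral_eq_zero : ∫ x in (0 : ℝ)..2, lam x = 0 := by
  simpa using hlam.integral_symm_eq_zero (left_mem_Icc.2 zero_le_one)

lemma bigLam_two_sub {u : ℝ} (hu : u ∈ Icc (0 : ℝ) 1) : bigLam lam (2 - u) = bigLam lam u := by
  have hu2 : u ∈ Icc (0 : ℝ) 2 := Icc_subset_Icc_right one_le_two hu
  rw [bigLam, bigLam, ← intervalIntegral.integral_add_adjacent_intervals
    (hlam.intervalIntegrable (left_mem_Icc.2 zero_le_two) hu2)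
    (hlam.intervalIntegrable hu2 ⟨by linarith [hu2.2], by linarith [hu.1]⟩),
    hlam.integral_symm_eq_zero hu, add_zero]

lemma integral_sq_bigLam : ∫ u in (0 : ℝ)..2, bigLam lam u ^ 2 = 1 := by
  have hreflect : ∫ u in (1 : ℝ)..2, bigLam lam u ^ 2 = ∫ u in (0 : ℝ)..1, bigLam lam u ^ 2 := by
    calc ∫ u in (1 : ℝ)..2, bigLam lam u ^ 2 = ∫ u in (0 : ℝ)..1, bigLam lam (2 - u) ^ 2 := by
          rw [intervalIntegral.integral_comp_sub_left fun u => bigLam lam u ^ 2]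
          norm_num
      _ = ∫ u in (0 : ℝ)..1, bigLam lam u ^ 2 :=
          intervalIntegral.integral_congr fun u hu => by
            rw [uIcc_of_le zero_le_one] at hu
            simp only [hlam.bigLam_two_sub hu]
  have hcont : ContinuousOn (fun u => bigLam lam u ^ 2) (Icc 0 2) := by
    have hprimitive := intervalIntegral.continuousOn_primitive_interval (f := lam)
      ((intervalIntegrable_iff' (by simp)).1 (hlam.intervalIntegrable
        (left_mem_Icc.2 zero_le_two) (right_mem_Icc.2 zero_le_two)))
    rw [uIcc_of_le zero_le_two] at hprimitive
    exact hprimitive.neg.pow 2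
  have hint : ∀ a b : ℝ, a ∈ Icc (0 : ℝ) 2 → b ∈ Icc (0 : ℝ) 2 →
      IntervalIntegrable (fun u => bigLam lam u ^ 2) volume a b := fun a b ha hb =>
    (hcont.mono (uIcc_subset_Icc ha hb)).intervalIntegrable
  have hnorm := Real.sqrt_eq_one.1 hlam.normalized
  rw [← intervalIntegral.integral_add_adjacent_intervals (hint 0 1 (by simp) (by simp))
    (hint 1 2 (by simp) (by simp)), hreflect, ← two_mul]
  simpa only [bigLam, neg_sq] using hnorm

end IsPreAverageFn

theorem preAveragedObs_variance (σ τ c : ℝ) (hσ : 0 < σ) (hτ : 0 < τ) (hc : 0 < c)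
    (lam : ℝ → ℝ) (hlam : IsPreAverageFn lam)
    (Ω : ℕ → Type*) [∀ n, MeasureSpace (Ω n)] [∀ n, IsProbabilityMeasure (ℙ : Measure (Ω n))]
    (W η : (n : ℕ) → ℕ → Ω n → ℝ)
    (hmodel : ∀ n, IsSimplifiedModel n (W n) (η n)) :
    (∃ C > 0, ∃ N : ℕ, ∀ n ≥ N, ∀ i : ℕ, 2 ≤ i → i ≤ mOf c n →
      |variance (preAvg lam n (mOf c n) (obs σ τ (W n) (η n)) i) ℙ
          - σ ^ 2 / (mOf c n : ℝ)
          - τ ^ 2 * ((mOf c n : ℝ) / n) * ∫ u in (0:ℝ)..2, (lam u) ^ 2| ≤ C / n) ∧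
    ∫ u in (0:ℝ)..2, (bigLam lam u) ^ 2 = 1 := by
  obtain ⟨C, hC, hbound⟩ := preAveragedObs_variance_general σ τ hc hlam.boundedVariationOn
    hlam.integral_eq_zero fun n => (hmodel n).isSecondOrderModel
  simp only [hlam.integral_sq_bigLam, mul_one] at hbound
  exact ⟨⟨C, hC, 0, fun n _ => hbound n⟩, hlam.integral_sq_bigLam⟩
end

section
/- In the simplified model, the variance of the total bias correction is negligible at rate n^{−1/2}: lim_{n→∞} n^{1/2} · Var(Σ_{i=2}^m 𝔟(λ,Y)_{i,m}) = 0. -/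
open MeasureTheory ProbabilityTheory Real

open Asymptotics Filter

/-! The sum of the bias corrections is `m² / (2 n²)` times a weighted sum of the `n` squared
increments of `Y`. The weights are bounded, because every `j` lies in at most three blocks. The
increments are jointly Gaussian with a tridiagonal covariance matrix whose entries are bounded
uniformly in `n`, so Isserlis' formula `Cov(X², Z²) = 2 Cov(X, Z)²` bounds the variance of the
weighted sum by a constant times `n`. Hence the variance of the total correction is `O(m⁴ / n³)`,
which is `o(n^(-1/2))` as soon as `m = o(n^(5/8))`, in particular for `m ∼ c √n`. -/

/-! ### Squares of Gaussian variables -/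

section GaussianMoments

variable {Ω : Type*} {mΩ : MeasurableSpace Ω} {P : Measure Ω}

lemma integral_pow_two_mul_gaussianReal (v : NNReal) (k : ℕ) :
    ∫ x, x ^ (2 * k) ∂gaussianReal 0 v = (2 * k - 1).doubleFactorial * (v : ℝ) ^ k := by
  rcases eq_or_ne v 0 with rfl | hv
  · rcases k.eq_zero_or_pos with rfl | hk
    · simp
    · simp [gaussianReal_zero_var, hk.ne']
  have : (0 : ℝ) < v := by exact_mod_cast pos_iff_ne_zero.2 hv
  calc ∫ x, x ^ (2 * k) ∂gaussianReal 0 v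
    _ = (√(2 * π * v))⁻¹ * ∫ x : ℝ, |x| ^ (2 * k : ℝ) * rexp (-(2 * v : ℝ)⁻¹ * |x| ^ (2 : ℝ)) := by
      rw [integral_gaussianReal_eq_integral_smul hv, ← integral_const_mul]
      congr with x
      have hpow : |x| ^ (2 * k : ℝ) = x ^ (2 * k) := by
        rw [← (even_two_mul k).pow_abs, ← rpow_natCast]; norm_cast
      rw [gaussianPDFReal, hpow, rpow_two, sq_abs, smul_eq_mul]
      ring_nf
    _ = (√(2 * π * v))⁻¹ * ((2 * v : ℝ) ^ (k + 1 / 2 : ℝ) * Gamma (k + 1 / 2)) := by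
      rw [integral_comp_abs (f := fun x ↦ x ^ (2 * k : ℝ) * rexp (-(2 * v : ℝ)⁻¹ * x ^ (2 : ℝ))),
        integral_rpow_mul_exp_neg_mul_rpow two_pos (by linarith [k.cast_nonneg (α := ℝ)])
          (by positivity), inv_rpow (by positivity), ← rpow_neg (by positivity)]
      ring_nf
    _ = (2 * k - 1).doubleFactorial * (v : ℝ) ^ k := by
      rw [Gamma_nat_add_half, rpow_add (by positivity), rpow_natCast, ← sqrt_eq_rpow, mul_pow,
        show 2 * π * v = π * (2 * v) by ring, sqrt_mul pi_nonneg]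
      field_simp

lemma integral_pow_four_of_hasGaussianLaw {X : Ω → ℝ} (hX : HasGaussianLaw X P)
    (hX₀ : P[X] = 0) : ∫ ω, X ω ^ 4 ∂P = 3 * Var[X; P] ^ 2 := by
  have hlaw : P.map X = gaussianReal 0 Var[X; P].toNNReal := hX₀ ▸ hX.map_eq_gaussianReal
  rw [← integral_map (f := fun x ↦ x ^ 4) hX.aemeasurable (by fun_prop), hlaw,
    integral_pow_two_mul_gaussianReal _ 2, coe_toNNReal _ (variance_nonneg _ _)]
  norm_num [Nat.doubleFactorial]

lemma memLp_two_sq_of_memLp_four {X : Ω → ℝ} (hX : MemLp X 4 P) :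
    MemLp (fun ω ↦ X ω ^ 2) 2 P := by
  have : ENNReal.HolderTriple 4 4 2 := ⟨by
    rw [← two_mul, show (4 : ENNReal) = 2 * 2 by norm_num, ENNReal.mul_inv (by simp) (by simp),
      ← mul_assoc, ENNReal.mul_inv_cancel (by simp) (by simp), one_mul]⟩
  simpa only [sq] using! hX.mul hX

lemma integral_sq_mul_sq_polarization {X Y : Ω → ℝ} (hX : MemLp X 4 P) (hY : MemLp Y 4 P) :
    12 * ∫ ω, X ω ^ 2 * Y ω ^ 2 ∂P
      = ∫ ω, (X ω + Y ω) ^ 4 ∂P + ∫ ω, (X ω - Y ω) ^ 4 ∂P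
        - 2 * ∫ ω, X ω ^ 4 ∂P - 2 * ∫ ω, Y ω ^ 4 ∂P := by
  have hint {Z : Ω → ℝ} (hZ : MemLp Z 4 P) : Integrable (fun ω ↦ Z ω ^ 4) P := by
    simpa [show Even 4 by decide, Even.pow_abs] using hZ.integrable_norm_pow (p := 4) (by simp)
  have hX₄ := (hint hX).const_mul 2
  have hY₄ := (hint hY).const_mul 2
  have hadd₄ : Integrable (fun ω ↦ (X ω + Y ω) ^ 4) P := hint (hX.add hY)
  have hsub₄ : Integrable (fun ω ↦ (X ω - Y ω) ^ 4) P := hint (hX.sub hY)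
  simp only [← integral_const_mul]
  rw [← integral_add hadd₄ hsub₄, ← integral_sub (by fun_prop) hX₄,
    ← integral_sub (by fun_prop) hY₄]
  congr with ω
  ring

lemma covariance_sq_sq_of_hasGaussianLaw {X Y : Ω → ℝ}
    (hXY : HasGaussianLaw (fun ω ↦ (X ω, Y ω)) P) (hX₀ : P[X] = 0) (hY₀ : P[Y] = 0) :
    cov[fun ω ↦ X ω ^ 2, fun ω ↦ Y ω ^ 2; P] = 2 * cov[X, Y; P] ^ 2 := by
  have := hXY.isProbabilityMeasure
  have hX := hXY.fst
  have hY := hXY.snd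
  have hX₄ : MemLp X 4 P := hX.memLp (by simp)
  have hY₄ : MemLp Y 4 P := hY.memLp (by simp)
  have hadd : ∫ ω, (X ω + Y ω) ^ 4 ∂P
      = 3 * (Var[X; P] + 2 * cov[X, Y; P] + Var[Y; P]) ^ 2 := by
    rw [← variance_add hX.memLp_two hY.memLp_two]
    refine integral_pow_four_of_hasGaussianLaw hXY.add ?_
    simp [integral_add hX.integrable hY.integrable, hX₀, hY₀]
  have hsub : ∫ ω, (X ω - Y ω) ^ 4 ∂P
      = 3 * (Var[X; P] - 2 * cov[X, Y; P] + Var[Y; P]) ^ 2 := by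
    rw [← variance_sub hX.memLp_two hY.memLp_two]
    refine integral_pow_four_of_hasGaussianLaw hXY.sub ?_
    simp [integral_sub hX.integrable hY.integrable, hX₀, hY₀]
  have hpol := integral_sq_mul_sq_polarization hX₄ hY₄
  rw [covariance_eq_sub (memLp_two_sq_of_memLp_four hX₄) (memLp_two_sq_of_memLp_four hY₄),
    ← variance_of_integral_eq_zero hX.aemeasurable hX₀,
    ← variance_of_integral_eq_zero hY.aemeasurable hY₀]
  simp only [Pi.mul_apply]
  rw [hadd, hsub, integral_pow_four_of_hasGaussianLaw hX hX₀,
    integral_pow_four_of_hasGaussianLaw hY hY₀] at hpol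
  linarith

lemma hasGaussianLaw_increments {n : ℕ} {Y : ℕ → Ω → ℝ}
    (hY : HasGaussianLaw (fun ω (j : Fin (n + 1)) ↦ Y j ω) P) :
    HasGaussianLaw (fun ω (k : Fin n) ↦ (Y (k + 1) - Y k) ω) P :=
  hY.map_fun (ContinuousLinearMap.pi fun k : Fin n ↦
    ContinuousLinearMap.proj (R := ℝ) (φ := fun _ ↦ ℝ) k.succ - ContinuousLinearMap.proj k.castSucc)

variable {ι : Type*} [Fintype ι] {X : ι → Ω → ℝ}

lemma variance_sum_mul_sq_of_hasGaussianLaw (hX : HasGaussianLaw (fun ω ↦ (X · ω)) P)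
    (hX₀ : ∀ i, P[X i] = 0) (g : ι → ℝ) :
    Var[fun ω ↦ ∑ i, g i * X i ω ^ 2; P] = 2 * ∑ i, ∑ j, g i * g j * cov[X i, X j; P] ^ 2 := by
  have := hX.isProbabilityMeasure
  rw [variance_fun_sum fun i ↦
      (memLp_two_sq_of_memLp_four ((hX.eval i).memLp (by simp))).const_mul (g i)]
  simp only [Finset.mul_sum]
  congr! 2 with i - j -
  rw [covariance_const_mul_left, covariance_const_mul_right,
    covariance_sq_sq_of_hasGaussianLaw (hX.prodMk i j) (hX₀ i) (hX₀ j)]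
  ring

lemma variance_sum_mul_sq_le_of_hasGaussianLaw (hX : HasGaussianLaw (fun ω ↦ (X · ω)) P)
    (hX₀ : ∀ i, P[X i] = 0) {g : ι → ℝ} {G S : ℝ} (hg : ∀ i, |g i| ≤ G)
    (hS : ∀ i, ∑ j, cov[X i, X j; P] ^ 2 ≤ S) :
    Var[fun ω ↦ ∑ i, g i * X i ω ^ 2; P] ≤ 2 * G ^ 2 * S * Fintype.card ι := by
  have hgg (i j : ι) : g i * g j ≤ G ^ 2 := by
    rw [sq]
    refine (le_abs_self _).trans ?_
    rw [abs_mul]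
    exact mul_le_mul (hg i) (hg j) (abs_nonneg _) ((abs_nonneg _).trans (hg i))
  calc Var[fun ω ↦ ∑ i, g i * X i ω ^ 2; P]
    _ = 2 * ∑ i, ∑ j, g i * g j * cov[X i, X j; P] ^ 2 :=
      variance_sum_mul_sq_of_hasGaussianLaw hX hX₀ g
    _ ≤ 2 * ∑ i, G ^ 2 * ∑ j, cov[X i, X j; P] ^ 2 := by
      simp only [Finset.mul_sum _ _ (G ^ 2)]
      gcongr
      exact hgg _ _
    _ ≤ 2 * ∑ _i : ι, G ^ 2 * S := by gcongr; exact hS _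
    _ = 2 * G ^ 2 * S * Fintype.card ι := by
      rw [Finset.sum_const, Finset.card_univ, nsmul_eq_mul]; ring

end GaussianMoments

/-! ### Tridiagonal sums, bounded functions and powers -/

lemma min_second_difference (k l : ℕ) :
    (min (k + 1) (l + 1) : ℝ) - min (k + 1 : ℝ) l - min (k : ℝ) (l + 1) + min (k : ℝ) l
      = if k = l then 1 else 0 := by
  rcases lt_trichotomy k l with h | rfl | h
  · have h' : (k : ℝ) + 1 ≤ l := by exact_mod_cast h
    rw [min_eq_left (by linarith), min_eq_left h', min_eq_left (by linarith),
      min_eq_left (by linarith), if_neg h.ne]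
    ring
  · simp
  · have h' : (l : ℝ) + 1 ≤ k := by exact_mod_cast h
    rw [min_eq_right (by linarith), min_eq_right (by linarith), min_eq_right h',
      min_eq_right (by linarith), if_neg h.ne']
    ring

lemma sum_sq_le_of_tridiagonal {n : ℕ} {a : Fin n → ℝ} {M : ℝ} (k : Fin n)
    (hM : ∀ l, |a l| ≤ M) (ha : ∀ l : Fin n, l.val ∉ Finset.Icc (k - 1 : ℕ) (k + 1) → a l = 0) :
    ∑ l, a l ^ 2 ≤ 3 * M ^ 2 := by
  have hcard : (Finset.univ.filter fun l : Fin n ↦ l.val ∈ Finset.Icc (k - 1 : ℕ) (k + 1)).card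
      ≤ 3 := by
    refine (Finset.card_le_card_of_injOn (t := Finset.Icc (k - 1 : ℕ) (k + 1)) Fin.val
      (fun l hl ↦ (Finset.mem_filter.1 hl).2) Fin.val_injective.injOn).trans ?_
    rw [Nat.card_Icc]
    omega
  calc ∑ l, a l ^ 2
    _ = ∑ l : Fin n with l.val ∈ Finset.Icc (k - 1 : ℕ) (k + 1), a l ^ 2 :=
      (Finset.sum_filter_of_ne fun l _ hl ↦ by_contra fun h ↦ hl (by simp [ha l h])).symm
    _ ≤ _ * M ^ 2 := by
      rw [← nsmul_eq_mul]
      exact Finset.sum_le_card_nsmul _ _ _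
        fun l _ ↦ sq_le_sq.2 ((hM l).trans (le_abs_self M))
    _ ≤ 3 * M ^ 2 := by gcongr; exact_mod_cast hcard

lemma isBounded_image_of_lipschitzOnWith {α β : Type*} [PseudoMetricSpace α]
    [PseudoMetricSpace β] {K : NNReal} {f : α → β} {s : Set α} (hf : LipschitzOnWith K f s)
    (hs : Bornology.IsBounded s) : Bornology.IsBounded (f '' s) := by
  obtain ⟨C, hC⟩ := Metric.isBounded_iff.1 hs
  refine Metric.isBounded_iff.2 ⟨K * C, ?_⟩
  rintro _ ⟨x, hx, rfl⟩ _ ⟨y, hy, rfl⟩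
  exact (hf.dist_le_mul x hx y hy).trans (by gcongr; exact hC hx hy)

lemma isBounded_image_Icc_of_forall_Ioo {α β : Type*} [LinearOrder α] [Bornology β]
    {f : α → β} {t : ℕ → α} (N : ℕ)
    (hf : ∀ i < N, Bornology.IsBounded (f '' Set.Ioo (t i) (t (i + 1)))) :
    Bornology.IsBounded (f '' Set.Icc (t 0) (t N)) := by
  induction N with
  | zero => simp
  | succ N ih =>
    have hcover : Set.Icc (t 0) (t (N + 1))
        ⊆ Set.Icc (t 0) (t N) ∪ Set.Ioo (t N) (t (N + 1)) ∪ {t (N + 1)} := by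
      rintro x ⟨h₀, h₁⟩
      rcases le_or_gt x (t N) with hx | hx
      · exact .inl (.inl ⟨h₀, hx⟩)
      · rcases h₁.lt_or_eq with hx' | rfl
        · exact .inl (.inr ⟨hx, hx'⟩)
        · exact .inr rfl
    refine .subset ?_ (Set.image_mono hcover)
    rw [Set.image_union, Set.image_union, Set.image_singleton]
    exact ((ih fun i hi ↦ hf i (hi.trans N.lt_succ_self)).union (hf N N.lt_succ_self)).union
      Bornology.isBounded_singleton

lemma isLittleO_rpow_rpow_atTop {p q : ℝ} (hpq : p < q) :
    (fun x : ℝ ↦ x ^ p) =o[atTop] fun x ↦ x ^ q := by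
  refine isLittleO_of_tendsto' ?_ ((tendsto_rpow_neg_atTop (sub_pos.2 hpq)).congr' ?_)
  · filter_upwards [eventually_gt_atTop 0] with x hx h
    exact absurd h (rpow_pos_of_pos hx q).ne'
  · filter_upwards [eventually_gt_atTop 0] with x hx
    rw [← rpow_sub hx, neg_sub]

/-! ### The observations -/

namespace IsSimplifiedModel

variable {Ω : Type*} [MeasureSpace Ω] {n : ℕ} {W η : ℕ → Ω → ℝ}

lemma measurable_obs (h : IsSimplifiedModel n W η) (σ τ : ℝ) (j : ℕ) :
    Measurable (obs σ τ W η j) :=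
  ((h.1 j).const_mul σ).add ((h.2.1 j).const_mul τ)

lemma exists_map_sum_obs_eq_gaussianReal (h : IsSimplifiedModel n W η) (σ τ : ℝ) (c : ℕ → ℝ) :
    ∃ v, Measure.map (fun ω ↦ ∑ j ∈ Finset.range (n + 1), c j * obs σ τ W η j ω) ℙ
      = gaussianReal 0 v := by
  simpa only [obs, mul_add, mul_assoc] using h.2.2.1 (c · * σ) (c · * τ)

lemma hasGaussianLaw_obs (h : IsSimplifiedModel n W η) (σ τ : ℝ) :
    HasGaussianLaw (fun ω (j : Fin (n + 1)) ↦ obs σ τ W η j ω) ℙ where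
  isGaussian_map := isGaussian_of_map_eq_gaussianReal fun L ↦ by
    obtain ⟨v, hv⟩ := h.exists_map_sum_obs_eq_gaussianReal σ τ
      fun j ↦ L fun i ↦ if i.val = j then 1 else 0
    refine ⟨0, v, ?_⟩
    have hmeas : Measurable fun ω (j : Fin (n + 1)) ↦ obs σ τ W η j ω :=
      measurable_pi_lambda _ fun j ↦ h.measurable_obs σ τ j
    rw [Measure.map_map (by fun_prop) hmeas, ← hv]
    congr 1 with ω
    rw [Function.comp_apply, ← L.coe_coe, LinearMap.pi_apply_eq_sum_univ, Finset.sum_range]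
    simp only [Fin.val_inj, smul_eq_mul, L.coe_coe, eq_comm, mul_comm]

lemma isProbabilityMeasure (h : IsSimplifiedModel n W η) :
    IsProbabilityMeasure (ℙ : Measure Ω) :=
  (h.hasGaussianLaw_obs 0 0).isProbabilityMeasure

lemma memLp_two_obs (h : IsSimplifiedModel n W η) (σ τ : ℝ) {j : ℕ} (hj : j ≤ n) :
    MemLp (obs σ τ W η j) 2 :=
  ((h.hasGaussianLaw_obs σ τ).eval ⟨j, Nat.lt_succ_of_le hj⟩).memLp_two

lemma integral_obs (h : IsSimplifiedModel n W η) (σ τ : ℝ) {j : ℕ} (hj : j ≤ n) :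
    ∫ ω, obs σ τ W η j ω = 0 := by
  obtain ⟨v, hv⟩ := h.exists_map_sum_obs_eq_gaussianReal σ τ fun i ↦ if j = i then 1 else 0
  have hjn : j < n + 1 := Nat.lt_succ_of_le hj
  simp only [ite_mul, one_mul, zero_mul, Finset.sum_ite_eq, Finset.mem_range, hjn, if_true] at hv
  rw [← integral_id_gaussianReal (μ := 0) (v := v), ← hv]
  exact (integral_map (h.measurable_obs σ τ j).aemeasurable
    measurable_id.aestronglyMeasurable).symm

lemma covariance_obs (h : IsSimplifiedModel n W η) (σ τ : ℝ) {j l : ℕ} (hj : j ≤ n) (hl : l ≤ n) :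
    cov[obs σ τ W η j, obs σ τ W η l]
      = σ ^ 2 * ((min j l : ℝ) / n) + if j = l then τ ^ 2 else 0 := by
  have := h.isProbabilityMeasure
  have hobs (σ τ : ℝ) (i : ℕ) : obs σ τ W η i = σ • W i + τ • η i := rfl
  have hmemW {i : ℕ} (hi : i ≤ n) : MemLp (W i) 2 := by simpa [hobs] using h.memLp_two_obs 1 0 hi
  have hmemη {i : ℕ} (hi : i ≤ n) : MemLp (η i) 2 := by simpa [hobs] using h.memLp_two_obs 0 1 hi
  have hW₀ {i : ℕ} (hi : i ≤ n) : ∫ ω, W i ω = 0 := by simpa [obs] using h.integral_obs 1 0 hi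
  have hη₀ {i : ℕ} (hi : i ≤ n) : ∫ ω, η i ω = 0 := by simpa [obs] using h.integral_obs 0 1 hi
  have hWW : cov[W j, W l] = (min j l : ℝ) / n := by
    simp [covariance_eq_sub (hmemW hj) (hmemW hl), hW₀ hj, h.2.2.2.1 j l hj hl]
  have hηη : cov[η j, η l] = if j = l then 1 else 0 := by
    simp [covariance_eq_sub (hmemη hj) (hmemη hl), hη₀ hj, h.2.2.2.2.1 j l hj hl]
  have hWη {i k : ℕ} (hi : i ≤ n) (hk : k ≤ n) : cov[W i, η k] = 0 := by
    simp [covariance_eq_sub (hmemW hi) (hmemη hk), hW₀ hi, h.2.2.2.2.2 i k hi hk]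
  rw [hobs, hobs, covariance_add_left ((hmemW hj).const_smul σ) ((hmemη hj).const_smul τ)
    (((hmemW hl).const_smul σ).add ((hmemη hl).const_smul τ)),
    covariance_add_right ((hmemW hj).const_smul σ) ((hmemW hl).const_smul σ)
      ((hmemη hl).const_smul τ),
    covariance_add_right ((hmemη hj).const_smul τ) ((hmemW hl).const_smul σ)
      ((hmemη hl).const_smul τ)]
  simp only [covariance_smul_left, covariance_smul_right, hWW, hηη, hWη hj hl,
    covariance_comm (X := η j), hWη hl hj, mul_ite, mul_one, mul_zero, add_zero, zero_add]
  split_ifs <;> ring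

lemma covariance_obs_increment (h : IsSimplifiedModel n W η) (σ τ : ℝ) {k l : ℕ} (hk : k < n)
    (hl : l < n) :
    cov[obs σ τ W η (k + 1) - obs σ τ W η k, obs σ τ W η (l + 1) - obs σ τ W η l]
      = if k = l then σ ^ 2 / n + 2 * τ ^ 2 else if k + 1 = l ∨ l + 1 = k then -τ ^ 2 else 0 := by
  have := h.isProbabilityMeasure
  have hmem {i : ℕ} (hi : i ≤ n) := h.memLp_two_obs σ τ hi
  rw [covariance_sub_sub (hmem hk) (hmem hk.le) (hmem hl) (hmem hl.le), h.covariance_obs σ τ hk hl,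
    h.covariance_obs σ τ hk hl.le, h.covariance_obs σ τ hk.le hl, h.covariance_obs σ τ hk.le hl.le]
  have hmin := min_second_difference k l
  push_cast
  split_ifs at hmin ⊢ <;> first | omega | linear_combination σ ^ 2 / n * hmin

lemma sum_sq_covariance_obs_increment_le (h : IsSimplifiedModel n W η) (σ τ : ℝ) (k : Fin n) :
    ∑ l : Fin n, cov[obs σ τ W η (k + 1) - obs σ τ W η k,
      obs σ τ W η (l + 1) - obs σ τ W η l] ^ 2 ≤ 3 * (σ ^ 2 + 2 * τ ^ 2) ^ 2 := by
  refine sum_sq_le_of_tridiagonal k (fun l ↦ ?_) fun l hl ↦ ?_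
  all_goals rw [h.covariance_obs_increment σ τ k.isLt l.isLt]
  · have hn : (1 : ℝ) ≤ n := by exact_mod_cast Nat.one_le_of_lt k.isLt
    have hσ := div_le_self (sq_nonneg σ) hn
    split_ifs
    · rw [abs_of_nonneg (by positivity)]
      linarith
    · rw [abs_neg, abs_sq]
      linarith [sq_nonneg σ, sq_nonneg τ]
    · rw [abs_zero]
      positivity
  · simp only [Finset.mem_Icc, tsub_le_iff_right] at hl
    rw [if_neg (by omega), if_neg (by omega)]

end IsSimplifiedModel

/-! ### The weights of the squared increments -/

/-- The total weight `∑ᵢ λ(m j/n - (i - 2))²` that the blocks containing `j` give to the squared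
increment `(Y_{j,n} - Y_{j-1,n})²` in the sum of all bias corrections. -/
noncomputable def biasWeight (lam : ℝ → ℝ) (n m j : ℕ) : ℝ :=
  ∑ i ∈ Finset.Icc 2 m with j ∈ blockIdx n m i, lam (m * j / n - (i - 2)) ^ 2

lemma sum_biasCorr {Ω : Type*} (lam : ℝ → ℝ) (n m : ℕ) (A : ℕ → Ω → ℝ) (ω : Ω) :
    ∑ i ∈ Finset.Icc 2 m, biasCorr lam n m A i ω
      = m ^ 2 / (2 * n ^ 2) *
        ∑ k : Fin n, biasWeight lam n m (k + 1) * (A (k + 1) - A k) ω ^ 2 := by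
  have hblock (i : ℕ) : (blockIdx n m i).filter (1 ≤ ·)
      = {j ∈ Finset.Ico 1 (n + 1) | j ∈ blockIdx n m i} := by
    ext j
    simp only [blockIdx, Finset.mem_filter, Finset.mem_range, Finset.mem_Ico]
    tauto
  simp only [biasCorr, biasWeight, ← Finset.mul_sum, hblock, Finset.sum_mul, Pi.sub_apply]
  congr 1
  rw [Finset.sum_comm' (t' := Finset.Ico (0 + 1) (n + 1))
    (s' := fun j ↦ {i ∈ Finset.Icc 2 m | j ∈ blockIdx n m i})
    (fun i j ↦ by simp only [Finset.mem_filter]; tauto), ← Finset.sum_Ico_add',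
    ← Finset.range_eq_Ico, Finset.sum_range]
  simp

lemma mem_Icc_of_mem_blockIdx {n m i j : ℕ} (hm : 0 < m) (hj : j ∈ blockIdx n m i) :
    (m * j / n - (i - 2) : ℝ) ∈ Set.Icc 0 2 := by
  have hm' : (0 : ℝ) < m := by exact_mod_cast hm
  obtain ⟨-, hleft, hright⟩ := Finset.mem_filter.1 hj
  rw [div_le_iff₀ hm'] at hleft
  rw [le_div_iff₀ hm'] at hright
  have : (m * j / n : ℝ) = j / n * m := by ring
  constructor <;> linarith

lemma card_blocks_containing_le (n m j : ℕ) :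
    {i ∈ Finset.Icc 2 m | j ∈ blockIdx n m i}.card ≤ 3 := by
  have hsub : {i ∈ Finset.Icc 2 m | j ∈ blockIdx n m i}
      ⊆ Finset.Icc ⌈(m * j / n : ℝ)⌉₊ (⌈(m * j / n : ℝ)⌉₊ + 2) := by
    intro i hi
    obtain ⟨him, hj⟩ := Finset.mem_filter.1 hi
    have hm : 0 < m := by grind
    obtain ⟨h₀, h₂⟩ := mem_Icc_of_mem_blockIdx hm hj
    have hceil := Nat.le_ceil (m * j / n : ℝ)
    refine Finset.mem_Icc.2 ⟨Nat.ceil_le.2 (by linarith), ?_⟩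
    rify
    linarith
  refine (Finset.card_le_card hsub).trans ?_
  rw [Nat.card_Icc]
  omega

lemma abs_biasWeight_le {lam : ℝ → ℝ} {C : ℝ} (hC : ∀ t ∈ Set.Icc (0 : ℝ) 2, |lam t| ≤ C)
    (n m j : ℕ) : |biasWeight lam n m j| ≤ 3 * C ^ 2 := by
  rw [biasWeight, abs_of_nonneg (Finset.sum_nonneg fun _ _ ↦ sq_nonneg _)]
  calc ∑ i ∈ Finset.Icc 2 m with j ∈ blockIdx n m i, lam (m * j / n - (i - 2)) ^ 2
    _ ≤ {i ∈ Finset.Icc 2 m | j ∈ blockIdx n m i}.card • C ^ 2 := by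
      refine Finset.sum_le_card_nsmul _ _ _ fun i hi ↦ ?_
      obtain ⟨him, hj⟩ := Finset.mem_filter.1 hi
      have hm : 0 < m := by grind
      exact sq_le_sq.2 ((hC _ (mem_Icc_of_mem_blockIdx hm hj)).trans (le_abs_self C))
    _ ≤ 3 * C ^ 2 := by
      rw [nsmul_eq_mul]
      gcongr
      exact_mod_cast card_blocks_containing_le n m j

lemma IsSimplifiedModel.variance_sum_biasCorr_le {Ω : Type*} [MeasureSpace Ω] {n : ℕ}
    {W η : ℕ → Ω → ℝ} (h : IsSimplifiedModel n W η) (σ τ : ℝ) {lam : ℝ → ℝ} {C : ℝ}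
    (hC : ∀ t ∈ Set.Icc (0 : ℝ) 2, |lam t| ≤ C) (m : ℕ) :
    Var[fun ω ↦ ∑ i ∈ Finset.Icc 2 m, biasCorr lam n m (obs σ τ W η) i ω]
      ≤ 27 / 2 * C ^ 4 * (σ ^ 2 + 2 * τ ^ 2) ^ 2 * ((m : ℝ) ^ 4 / n ^ 3) := by
  have hmean (k : Fin n) : ∫ ω, (obs σ τ W η (k + 1) - obs σ τ W η k) ω = 0 := by
    have := h.isProbabilityMeasure
    have hint {j : ℕ} (hj : j ≤ n) := (h.memLp_two_obs σ τ hj).integrable one_le_two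
    rw [integral_sub' (hint k.isLt) (hint k.isLt.le), h.integral_obs σ τ k.isLt,
      h.integral_obs σ τ k.isLt.le, sub_zero]
  simp only [sum_biasCorr]
  rw [variance_const_mul]
  calc ((m : ℝ) ^ 2 / (2 * n ^ 2)) ^ 2 * Var[fun ω ↦ ∑ k : Fin n,
        biasWeight lam n m (k + 1) * (obs σ τ W η (k + 1) - obs σ τ W η k) ω ^ 2]
    _ ≤ ((m : ℝ) ^ 2 / (2 * n ^ 2)) ^ 2 *
        (2 * (3 * C ^ 2) ^ 2 * (3 * (σ ^ 2 + 2 * τ ^ 2) ^ 2) * Fintype.card (Fin n)) := by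
      gcongr
      exact variance_sum_mul_sq_le_of_hasGaussianLaw
        (hasGaussianLaw_increments (h.hasGaussianLaw_obs σ τ)) hmean
        (fun k ↦ abs_biasWeight_le hC n m (k + 1)) (h.sum_sq_covariance_obs_increment_le σ τ)
    _ = 27 / 2 * C ^ 4 * (σ ^ 2 + 2 * τ ^ 2) ^ 2 * ((m : ℝ) ^ 4 / n ^ 3) := by
      rw [Fintype.card_fin]
      field_simp
      ring

/-! ### Boundedness of `λ` and growth of `m` -/

lemma IsPreAverageFn.isBounded_image {lam : ℝ → ℝ} (h : IsPreAverageFn lam) :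
    Bornology.IsBounded (lam '' Set.Icc 0 2) := by
  obtain ⟨N, t, K, -, h₀, h₂, -, hlip⟩ := h.piecewise_lipschitz
  rw [← h₀, ← h₂]
  exact isBounded_image_Icc_of_forall_Ioo N fun i hi ↦
    isBounded_image_of_lipschitzOnWith (hlip i hi) (Metric.isBounded_Ioo _ _)

lemma mOf_isBigO_sqrt {c : ℝ} (hc : 0 < c) : (fun n ↦ (mOf c n : ℝ)) =O[atTop] fun n ↦ √n := by
  have hdiv : Tendsto (fun n : ℕ ↦ √n / c) atTop atTop :=
    (tendsto_sqrt_atTop.comp tendsto_natCast_atTop_atTop).atTop_div_const hc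
  have hfloor : (fun n : ℕ ↦ (⌊√n / c⌋₊ : ℝ)) ~[atTop] fun n ↦ √n / c :=
    isEquivalent_nat_floor.comp_tendsto hdiv
  calc (fun n ↦ (mOf c n : ℝ))
    _ =O[atTop] fun n : ℕ ↦ (n : ℝ) / ⌊√n / c⌋₊ :=
      .of_norm_le fun n ↦ by
        rw [norm_of_nonneg (by positivity)]
        exact Nat.cast_div_le
    _ =O[atTop] fun n : ℕ ↦ (n : ℝ) / (√n / c) := (IsEquivalent.refl.div hfloor).isBigO
    _ = fun n : ℕ ↦ c * √n := by
      ext n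
      rw [div_div_eq_mul_div, mul_div_right_comm, div_sqrt, mul_comm]
    _ =O[atTop] fun n ↦ √n := isBigO_const_mul_self c _ _

lemma mOf_isLittleO_rpow {c p : ℝ} (hc : 0 < c) (hp : 1 / 2 < p) :
    (fun n ↦ (mOf c n : ℝ)) =o[atTop] fun n ↦ (n : ℝ) ^ p := by
  refine (mOf_isBigO_sqrt hc).trans_isLittleO ?_
  simp only [sqrt_eq_rpow]
  exact (isLittleO_rpow_rpow_atTop hp).comp_tendsto tendsto_natCast_atTop_atTop

lemma tendsto_sqrt_mul_pow_four_div {m : ℕ → ℕ}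
    (hm : (fun n ↦ (m n : ℝ)) =o[atTop] fun n ↦ (n : ℝ) ^ (5 / 8 : ℝ)) :
    Tendsto (fun n : ℕ ↦ √n * ((m n : ℝ) ^ 4 / n ^ 3)) atTop (nhds 0) := by
  refine (hm.pow four_pos).tendsto_div_nhds_zero.congr' ?_
  filter_upwards [eventually_gt_atTop 0] with n hn
  have hn' : (0 : ℝ) < n := by exact_mod_cast hn
  have hpow : √n * ((n : ℝ) ^ (5 / 8 : ℝ)) ^ 4 = n ^ 3 := by
    rw [sqrt_eq_rpow, ← rpow_mul_natCast hn'.le, ← rpow_add hn', ← rpow_natCast]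
    norm_num
  rw [← hpow]
  field_simp

theorem biasCorrection_variance_negligible_general (σ τ : ℝ) {lam : ℝ → ℝ}
    (hlam : Bornology.IsBounded (lam '' Set.Icc 0 2)) {m : ℕ → ℕ}
    (hm : (fun n ↦ (m n : ℝ)) =o[atTop] fun n ↦ (n : ℝ) ^ (5 / 8 : ℝ))
    (Ω : ℕ → Type*) [∀ n, MeasureSpace (Ω n)] (W η : (n : ℕ) → ℕ → Ω n → ℝ)
    (hmodel : ∀ n, IsSimplifiedModel n (W n) (η n)) :
    Tendsto (fun n : ℕ ↦ √n * Var[fun ω ↦ ∑ i ∈ Finset.Icc 2 (m n),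
      biasCorr lam n (m n) (obs σ τ (W n) (η n)) i ω]) atTop (nhds 0) := by
  obtain ⟨C, hC⟩ := hlam.exists_norm_le
  have hC' (t : ℝ) (ht : t ∈ Set.Icc 0 2) : |lam t| ≤ C := hC _ (Set.mem_image_of_mem lam ht)
  have hlim := (tendsto_sqrt_mul_pow_four_div hm).const_mul
    (27 / 2 * C ^ 4 * (σ ^ 2 + 2 * τ ^ 2) ^ 2)
  rw [mul_zero] at hlim
  refine squeeze_zero (fun n ↦ mul_nonneg (sqrt_nonneg _) (variance_nonneg _ _)) (fun n ↦ ?_) hlim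
  rw [mul_left_comm]
  gcongr
  exact (hmodel n).variance_sum_biasCorr_le σ τ hC' (m n)

theorem biasCorrection_variance_negligible (σ τ c : ℝ) (hσ : 0 < σ) (hτ : 0 < τ) (hc : 0 < c)
    (lam : ℝ → ℝ) (hlam : IsPreAverageFn lam)
    (Ω : ℕ → Type*) [∀ n, MeasureSpace (Ω n)] [∀ n, IsProbabilityMeasure (ℙ : Measure (Ω n))]
    (W η : (n : ℕ) → ℕ → Ω n → ℝ)
    (hmodel : ∀ n, IsSimplifiedModel n (W n) (η n)) :
    Filter.Tendsto (fun n : ℕ => Real.sqrt n *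
        variance (fun ω => ∑ i ∈ Finset.Icc 2 (mOf c n),
          biasCorr lam n (mOf c n) (obs σ τ (W n) (η n)) i ω) ℙ)
      Filter.atTop (nhds 0) :=
  biasCorrection_variance_negligible_general σ τ hlam.isBounded_image
    (mOf_isLittleO_rpow hc (by norm_num)) Ω W η hmodel
end
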